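/- arXiv:2506.09752 — 5 statements merged into one kernel-verified Lean document; each statement's English description precedes it below -/
import Mathlib

section
/- (Fundamental solution of the Bopp–Podolsky operator, distributional form.) Let a > 0 and define K_a : ℝ³ → ℝ by K_a(x) = (1 - exp(-‖x‖/a))/‖x‖ for x ≠ 0 and K_a(0) = 1/a. Then for every smooth compactly supported test function φ : ℝ³ → ℝ one has ∫_{ℝ³} K_a(x) ( -Δφ(x) + a² Δ²φ(x) ) dx = 4π φ(0), where Δφ is the Laplacian of φ and Δ²φ = Δ(Δφ) is the bi-Laplacian. -/
open MeasureTheory Real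
open scoped ENNReal Classical

noncomputable section

abbrev E3 := EuclideanSpace ℝ (Fin 3)

/-- Bopp–Podolsky kernel with parameter `a`. -/
def Ka (a : ℝ) (x : E3) : ℝ := if x = 0 then 1 / a else (1 - Real.exp (-‖x‖ / a)) / ‖x‖

/-- Laplacian of `f` at `x`: sum of second derivatives along the coordinate directions. -/
def lap (f : E3 → ℝ) (x : E3) : ℝ :=
  ∑ i : Fin 3, fderiv ℝ (fun y => fderiv ℝ f y (EuclideanSpace.single i 1)) x
    (EuclideanSpace.single i 1)

open Set Filter Topology Metric

lemma bp_aesm {F : E3 → ℝ} (hF : ContinuousOn F {0}ᶜ) : AEStronglyMeasurable F volume := by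
  have h := hF.aestronglyMeasurable (μ := (volume : Measure E3)) (measurableSet_singleton 0).compl
  rwa [MeasureTheory.restrict_compl_singleton] at h

lemma bp_ae_ne : ∀ᵐ x : E3, x ≠ 0 := by
  have : ({0}ᶜ : Set E3) ∈ ae (volume : Measure E3) := by
    rw [mem_ae_iff]; simp
  exact this

lemma bp_bound_integrable (C R : ℝ) :
    IntegrableOn (fun x : E3 => C * (1 / ‖x‖ + 1 / ‖x‖ ^ 2)) (ball 0 R) volume := by
  have := (integrableOn_fun_norm_addHaar (E := E3) volume
    (f := fun y : ℝ => C * (1 / y + 1 / y ^ 2)) (r := R)).2 ?_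
  · exact this
  have h1 : IntegrableOn (fun y : ℝ => C * (y + 1)) (Ioo 0 R) := by
    have : ContinuousOn (fun y : ℝ => C * (y + 1)) (Icc 0 R) := by fun_prop
    exact this.integrableOn_Icc.mono_set Ioo_subset_Icc_self
  refine h1.congr_fun ?_ measurableSet_Ioo
  intro y hy
  have : y ≠ 0 := hy.1.ne'
  simp only [finrank_euclideanSpace, Fintype.card_fin, smul_eq_mul]
  norm_num
  field_simp

lemma bp_integrable {F χ : E3 → ℝ} (hF : AEStronglyMeasurable F volume) {C : ℝ}
    (hb : ∀ x, x ≠ 0 → |F x| ≤ C * (1 / ‖x‖ + 1 / ‖x‖ ^ 2))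
    (hχ : Continuous χ) (hc : HasCompactSupport χ) : Integrable (fun x => F x * χ x) := by
  obtain ⟨M, hM⟩ := hχ.bounded_above_of_compact_support hc
  obtain ⟨R, hR⟩ := hc.isCompact.isBounded.subset_ball (0 : E3)
  have h1 : IntegrableOn F (ball 0 R) := by
    refine (bp_bound_integrable C R).mono' hF.restrict ?_
    filter_upwards [ae_restrict_of_ae bp_ae_ne] with x hx
    exact hb x hx
  have h2 : IntegrableOn (fun x => F x * χ x) (ball 0 R) :=
    h1.mul_bdd hχ.aestronglyMeasurable.restrict (ae_of_all _ hM)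
  refine (integrableOn_iff_integrable_of_support_subset ?_).1 h2
  intro x hx
  apply hR
  apply subset_tsupport
  intro h
  exact hx (by simp [h])

lemma bp_polar {f : E3 → ℝ} (hf : Integrable f) {A : ℝ}
    (h : ∀ w : E3, ‖w‖ = 1 → ∫ r in Ioi (0:ℝ), r ^ 2 * f (r • w) = A) :
    ∫ x, f x = 4 * π * A := by
  have hmp := (volume : Measure E3).measurePreserving_homeomorphUnitSphereProd
  have hemb := (homeomorphUnitSphereProd E3).measurableEmbedding
  set f' : sphere (0:E3) 1 × Ioi (0:ℝ) → ℝ := fun p => f (p.2.1 • p.1.1) with hf'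
  have hcomp : ∀ x : ({(0)}ᶜ : Set E3), f' (homeomorphUnitSphereProd E3 x) = f x := by
    intro x
    have hx : ‖(x:E3)‖ ≠ 0 := norm_ne_zero_iff.2 x.2
    simp only [hf', homeomorphUnitSphereProd_apply_snd_coe,
      homeomorphUnitSphereProd_apply_fst_coe, smul_smul, mul_inv_cancel₀ hx, one_smul]
  have e1 : ∫ x, f x = ∫ p, f' p ∂((volume : Measure E3).toSphere.prod
      (.volumeIoiPow (Module.finrank ℝ E3 - 1))) := by
    rw [← hmp.integral_comp hemb]
    simp only [hcomp]
    rw [integral_subtype_comap (measurableSet_singleton _).compl f,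
        MeasureTheory.restrict_compl_singleton]
  have hint : Integrable f' ((volume : Measure E3).toSphere.prod
      (.volumeIoiPow (Module.finrank ℝ E3 - 1))) := by
    rw [← hmp.integrable_comp_emb hemb]
    have : f' ∘ (homeomorphUnitSphereProd E3) = f ∘ Subtype.val := by
      ext x; exact hcomp x
    rw [this, ← integrableOn_iff_comap_subtypeVal (measurableSet_singleton _).compl]
    exact hf.integrableOn
  rw [e1, integral_prod _ hint]
  have e2 : ∀ w : sphere (0:E3) 1, ∫ r, f' (w, r) ∂(Measure.volumeIoiPow
      (Module.finrank ℝ E3 - 1)) = A := by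
    intro w
    rw [← h w.1 (by simp)]
    simp only [Measure.volumeIoiPow, ENNReal.ofReal, hf']
    rw [integral_withDensity_eq_integral_smul,
        integral_subtype_comap measurableSet_Ioi
          (fun a : ℝ ↦ Real.toNNReal (a ^ (Module.finrank ℝ E3 - 1)) • f (a • w.1)),
        setIntegral_congr_fun measurableSet_Ioi fun x hx ↦ ?_]
    · simp only [finrank_euclideanSpace, Fintype.card_fin]
      rw [NNReal.smul_def, Real.coe_toNNReal _ (pow_nonneg hx.out.le _)]
      simp
    · exact (measurable_subtype_coe.pow_const _).real_toNNReal
  rw [integral_congr_ae (ae_of_all _ e2)]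
  rw [integral_const, Measure.toSphere_real_apply_univ]
  simp only [finrank_euclideanSpace,
    Fintype.card_fin, smul_eq_mul, Measure.real, EuclideanSpace.volume_ball_fin_three]
  rw [ENNReal.toReal_mul, ENNReal.toReal_ofReal (by positivity)]
  simp only [ENNReal.ofReal_one, one_pow, ENNReal.toReal_one, Nat.cast_ofNat]
  ring

lemma bp_parts {g g' : ℝ → ℝ} {C : ℝ}
    (hg : ∀ r, 0 < r → HasDerivAt g (g' r) r) (hg'c : ContinuousOn g' (Ioi 0))
    (hgb : ∀ r, 0 < r → |g r| ≤ C / r) (hg'b : ∀ r, 0 < r → |g' r| ≤ C / r ^ 2)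
    {χ : E3 → ℝ} (hχ : ContDiff ℝ 1 χ) (hc : HasCompactSupport χ) (v : E3) :
    ∫ x, g ‖x‖ * fderiv ℝ χ x v = - ∫ x, (g' ‖x‖ / ‖x‖ * inner ℝ x v) * χ x := by
  have hgc : ContinuousOn g (Ioi 0) := fun r hr => (hg r hr).continuousAt.continuousWithinAt
  have hC : 0 ≤ C := by simpa using (abs_nonneg _).trans (hgb 1 one_pos)
  have hdχ : Continuous (fun x => fderiv ℝ χ x v) :=
    (hχ.continuous_fderiv (by norm_num)).clm_apply continuous_const
  have hdc : HasCompactSupport (fun x => fderiv ℝ χ x v) := hc.fderiv_apply ℝ v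
  set ε : ℕ → ℝ := fun n => 1 / ((n:ℝ) + 1) with hε
  have hεp : ∀ n, 0 < ε n := fun n => by simp only [hε]; positivity
  have hεt : Tendsto ε atTop (𝓝 0) := tendsto_one_div_add_atTop_nhds_zero_nat
  set s : ℕ → E3 → ℝ := fun n x => √(‖x‖ ^ 2 + ε n ^ 2) with hs
  have hsp : ∀ n x, 0 < s n x := fun n x => by
    have := hεp n
    simp only [hs]; positivity
  have hsx : ∀ n x, ‖x‖ ≤ s n x := fun n x => by
    apply Real.le_sqrt_of_sq_le
    nlinarith [sq_nonneg (ε n)]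
  have hsc : ∀ n, Continuous (s n) := fun n => by simp only [hs]; fun_prop
  have hst : ∀ x, Tendsto (fun n => s n x) atTop (𝓝 ‖x‖) := fun x => by
    have : Tendsto (fun n => √(‖x‖ ^ 2 + ε n ^ 2)) atTop (𝓝 √(‖x‖ ^ 2 + 0 ^ 2)) :=
      ((hεt.pow 2).const_add _).sqrt
    simpa using this
  have hsd : ∀ n x, HasFDerivAt (s n) ((1 / s n x) • innerSL ℝ x) x := fun n x => by
    have h1 : HasFDerivAt (fun x : E3 => ‖x‖ ^ 2 + ε n ^ 2) (2 • innerSL ℝ x) x :=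
      (hasStrictFDerivAt_norm_sq x).hasFDerivAt.add_const _
    have := h1.sqrt (by have := hεp n; positivity)
    refine this.congr_fderiv ?_
    have h0 : √(‖x‖ ^ 2 + ε n ^ 2) ≠ 0 := (hsp n x).ne'
    ext y
    simp only [hs, smul_apply, nsmul_eq_mul, smul_eq_mul, Nat.cast_ofNat]
    field_simp
  have hGd : ∀ n x, HasFDerivAt (fun x => g (s n x))
      ((g' (s n x)) • ((1 / s n x) • innerSL ℝ x)) x := fun n x =>
    (hg _ (hsp n x)).comp_hasFDerivAt x (hsd n x)
  have hGc : ∀ n, Continuous (fun x => g (s n x)) := fun n =>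
    hgc.comp_continuous (hsc n) (hsp n)
  have hG'c : ∀ n, Continuous (fun x => g' (s n x) / s n x * inner ℝ x v) := fun n =>
    ((hg'c.comp_continuous (hsc n) (hsp n)).div (hsc n) (fun x => (hsp n x).ne')).mul
      (by fun_prop)
  have key : ∀ n, ∫ x, g (s n x) * fderiv ℝ χ x v =
      - ∫ x, (g' (s n x) / s n x * inner ℝ x v) * χ x := by
    intro n
    have hfd : ∀ x, fderiv ℝ (fun x => g (s n x)) x v = g' (s n x) / s n x * inner ℝ x v := by
      intro x
      rw [(hGd n x).fderiv]
      simp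
      ring
    rw [integral_mul_fderiv_eq_neg_fderiv_mul_of_integrable]
    · simp only [hfd]
    · simp only [hfd]
      exact ((hG'c n).mul hχ.continuous).integrable_of_hasCompactSupport hc.mul_left
    · exact ((hGc n).mul hdχ).integrable_of_hasCompactSupport hdc.mul_left
    · exact ((hGc n).mul hχ.continuous).integrable_of_hasCompactSupport hc.mul_left
    · exact fun x _ => (hGd n x).differentiableAt
    · exact fun x _ => (hχ.differentiable (by norm_num)) x
  have hbm : ∀ D : ℝ, AEStronglyMeasurable (fun x : E3 => D * (1 / ‖x‖ + 1 / ‖x‖ ^ 2)) volume := by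
    intro D
    apply Measurable.aestronglyMeasurable
    fun_prop
  have hbI : ∀ D : ℝ, 0 ≤ D → ∀ η : E3 → ℝ, Continuous η → HasCompactSupport η →
      Integrable (fun x => D * (1 / ‖x‖ + 1 / ‖x‖ ^ 2) * |η x|) := by
    intro D hD η h1 h2
    refine bp_integrable (C := D) (hbm D) ?_ h1.abs h2.norm
    intro x _
    rw [abs_of_nonneg (by positivity)]
  have L1 : Tendsto (fun n => ∫ x, g (s n x) * fderiv ℝ χ x v) atTop
      (𝓝 (∫ x, g ‖x‖ * fderiv ℝ χ x v)) := by
    refine tendsto_integral_of_dominated_convergence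
      (fun x => C * (1 / ‖x‖ + 1 / ‖x‖ ^ 2) * |fderiv ℝ χ x v|) ?_ (hbI C hC _ hdχ hdc) ?_ ?_
    · exact fun n => ((hGc n).mul hdχ).aestronglyMeasurable
    · intro n
      filter_upwards [bp_ae_ne] with x hx
      have hx' : 0 < ‖x‖ := norm_pos_iff.2 hx
      rw [Real.norm_eq_abs, abs_mul]
      gcongr
      calc |g (s n x)| ≤ C / s n x := hgb _ (hsp n x)
        _ ≤ C / ‖x‖ := by gcongr; exact hsx n x
        _ = C * (1 / ‖x‖) := by ring
        _ ≤ _ := by gcongr; simp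
    · filter_upwards [bp_ae_ne] with x hx
      have hx' : 0 < ‖x‖ := norm_pos_iff.2 hx
      exact ((hg _ hx').continuousAt.tendsto.comp (hst x)).mul_const _
  have L2 : Tendsto (fun n => ∫ x, (g' (s n x) / s n x * inner ℝ x v) * χ x) atTop
      (𝓝 (∫ x, (g' ‖x‖ / ‖x‖ * inner ℝ x v) * χ x)) := by
    refine tendsto_integral_of_dominated_convergence
      (fun x => (C * ‖v‖) * (1 / ‖x‖ + 1 / ‖x‖ ^ 2) * |χ x|) ?_
      (hbI _ (by positivity) _ hχ.continuous hc) ?_ ?_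
    · exact fun n => ((hG'c n).mul hχ.continuous).aestronglyMeasurable
    · intro n
      filter_upwards [bp_ae_ne] with x hx
      have hx' : 0 < ‖x‖ := norm_pos_iff.2 hx
      have hsp' := hsp n x
      rw [Real.norm_eq_abs, abs_mul]
      gcongr
      rw [abs_mul, abs_div, abs_of_pos hsp']
      calc |g' (s n x)| / s n x * |inner ℝ x v|
          ≤ (C / s n x ^ 2) / s n x * (s n x * ‖v‖) := by
            gcongr
            · exact hg'b _ hsp'
            · exact (abs_real_inner_le_norm x v).trans (by gcongr; exact hsx n x)
        _ = (C * ‖v‖) * (1 / s n x ^ 2) := by field_simp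
        _ ≤ (C * ‖v‖) * (1 / ‖x‖ ^ 2) := by gcongr; exact hsx n x
        _ ≤ _ := by gcongr; simp
    · filter_upwards [bp_ae_ne] with x hx
      have hx' : 0 < ‖x‖ := norm_pos_iff.2 hx
      have hca : ContinuousAt g' ‖x‖ := hg'c.continuousAt (Ioi_mem_nhds hx')
      exact (((hca.tendsto.comp (hst x)).div (hst x) hx'.ne').mul_const _).mul_const _
  have L3 := L1
  simp only [key] at L3
  exact tendsto_nhds_unique L3 L2.neg

lemma bp_sum_fderiv (f : E3 → ℝ) (x : E3) :
    ∑ i : Fin 3, inner ℝ x (EuclideanSpace.single i (1:ℝ)) * fderiv ℝ f x (EuclideanSpace.single i 1)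
      = fderiv ℝ f x x := by
  have hx : x = ∑ i : Fin 3, x i • EuclideanSpace.single i (1:ℝ) := by
    ext j
    simp [Finset.sum_apply, Pi.single_apply]
  have h2 : fderiv ℝ f x (∑ i : Fin 3, x i • EuclideanSpace.single i (1:ℝ)) = fderiv ℝ f x x := by
    rw [← hx]
  rw [← h2, map_sum]
  refine Finset.sum_congr rfl fun i _ => ?_
  rw [map_smul, smul_eq_mul]
  congr 1
  simp [EuclideanSpace.inner_single_right]

lemma bp_radial {g H q : ℝ → ℝ} {C D : ℝ}
    (hg : ∀ r, 0 < r → HasDerivAt g (H r / r ^ 2) r) (hHc : Continuous H)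
    (hH : ∀ r, 0 < r → HasDerivAt H (r ^ 2 * q r) r) (hqc : ContinuousOn q (Ioi 0))
    (hgb : ∀ r, 0 < r → |g r| ≤ C / r) (hHb : ∀ r, 0 < r → |H r| ≤ C)
    (hqb : ∀ r, 0 < r → |q r| ≤ D / r)
    {ψ : E3 → ℝ} (hψ : ContDiff ℝ 2 ψ) (hc : HasCompactSupport ψ) :
    ∫ x, g ‖x‖ * lap ψ x = 4 * π * (H 0 * ψ 0) + ∫ x, q ‖x‖ * ψ x := by
  have hC : 0 ≤ C := (abs_nonneg _).trans (hHb 1 one_pos)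
  have hD : 0 ≤ D := by simpa using (abs_nonneg _).trans (hqb 1 one_pos)
  have hgc : ContinuousOn g (Ioi 0) := fun r hr => (hg r hr).continuousAt.continuousWithinAt
  have hψ1 : ContDiff ℝ 1 ψ := hψ.of_le (by norm_num)
  have hdi : ∀ v : E3, ContDiff ℝ 1 (fun x => fderiv ℝ ψ x v) := fun v =>
    (hψ.fderiv_right (m := 1) (by norm_num)).clm_apply contDiff_const
  have hdic : ∀ v : E3, HasCompactSupport (fun x => fderiv ℝ ψ x v) := fun v => hc.fderiv_apply ℝ v
  have hdd : ∀ v : E3, Continuous (fun x => fderiv ℝ (fun y => fderiv ℝ ψ y v) x v) := fun v =>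
    ((hdi v).continuous_fderiv (by norm_num)).clm_apply continuous_const
  have hg'c : ContinuousOn (fun r => H r / r ^ 2) (Ioi 0) :=
    hHc.continuousOn.div (by fun_prop) (fun r hr => pow_ne_zero _ (ne_of_gt hr))
  have hg'b : ∀ r, 0 < r → |H r / r ^ 2| ≤ C / r ^ 2 := fun r hr => by
    rw [abs_div, abs_of_pos (pow_pos hr 2)]
    gcongr
    exact hHb r hr
  have hmaps : MapsTo (fun x : E3 => ‖x‖) {0}ᶜ (Ioi 0) := fun x hx => norm_pos_iff.2 hx
  have hnc : ContinuousOn (fun x : E3 => ‖x‖) {0}ᶜ := by fun_prop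
  -- integrability
  have I1 : ∀ v : E3, Integrable
      (fun x => g ‖x‖ * fderiv ℝ (fun y => fderiv ℝ ψ y v) x v) := fun v => by
    refine bp_integrable (C := C) (bp_aesm (hgc.comp hnc hmaps)) ?_ (hdd v)
      ((hdic v).fderiv_apply ℝ v)
    intro x hx
    have hx' : 0 < ‖x‖ := norm_pos_iff.2 hx
    refine (hgb _ hx').trans ?_
    rw [mul_add, mul_one_div]
    have : 0 ≤ C * (1 / ‖x‖ ^ 2) := by positivity
    linarith
  have I2 : ∀ v : E3, Integrable
      (fun x => ((H ‖x‖ / ‖x‖ ^ 2) / ‖x‖ * inner ℝ x v) * fderiv ℝ ψ x v) := fun v => by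
    refine bp_integrable (C := C * ‖v‖) (bp_aesm ?_) ?_ (hdi v).continuous (hdic v)
    · refine ((hg'c.comp hnc hmaps).div hnc ?_).mul (by fun_prop)
      exact fun x hx => norm_ne_zero_iff.2 hx
    intro x hx
    have hx' : 0 < ‖x‖ := norm_pos_iff.2 hx
    rw [abs_mul, abs_div, abs_of_pos hx']
    calc |H ‖x‖ / ‖x‖ ^ 2| / ‖x‖ * |inner ℝ x v|
          ≤ (C / ‖x‖ ^ 2) / ‖x‖ * (‖x‖ * ‖v‖) := by
            gcongr
            · exact hg'b _ hx'
            · exact abs_real_inner_le_norm x v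
        _ = (C * ‖v‖) * (1 / ‖x‖ ^ 2) := by field_simp
        _ ≤ _ := by gcongr; simp
  have I3 : Integrable (fun x => q ‖x‖ * ψ x) := by
    refine bp_integrable (C := D) (bp_aesm (hqc.comp hnc hmaps)) ?_ hψ.continuous hc
    intro x hx
    have hx' : 0 < ‖x‖ := norm_pos_iff.2 hx
    refine (hqb _ hx').trans ?_
    rw [mul_add, mul_one_div]
    have : 0 ≤ D * (1 / ‖x‖ ^ 2) := by positivity
    linarith
  have hsum : ∀ x : E3, ∑ i : Fin 3, ((H ‖x‖ / ‖x‖ ^ 2) / ‖x‖ *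
      inner ℝ x (EuclideanSpace.single i (1:ℝ))) * fderiv ℝ ψ x (EuclideanSpace.single i 1)
      = (H ‖x‖ / ‖x‖ ^ 2) / ‖x‖ * fderiv ℝ ψ x x := by
    intro x
    rw [← bp_sum_fderiv, Finset.mul_sum]
    exact Finset.sum_congr rfl fun i _ => by ring
  have I4 : Integrable (fun x => (H ‖x‖ / ‖x‖ ^ 2) / ‖x‖ * fderiv ℝ ψ x x) := by
    have := integrable_finsetSum Finset.univ
      (fun i (_ : i ∈ Finset.univ) => I2 (EuclideanSpace.single (i : Fin 3) (1:ℝ)))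
    simpa only [hsum] using this
  have step1 : ∫ x, g ‖x‖ * lap ψ x = - ∫ x, (H ‖x‖ / ‖x‖ ^ 2) / ‖x‖ * fderiv ℝ ψ x x := by
    simp only [lap, Finset.mul_sum]
    rw [integral_finsetSum _ (fun i _ => I1 _)]
    simp only [← hsum]
    rw [integral_finsetSum _ (fun i _ => I2 _), ← Finset.sum_neg_distrib]
    exact Finset.sum_congr rfl fun i _ => bp_parts hg hg'c hgb hg'b (hdi _) (hdic _) _
  -- polar
  have step2 : ∫ x, (q ‖x‖ * ψ x + (H ‖x‖ / ‖x‖ ^ 2) / ‖x‖ * fderiv ℝ ψ x x)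
      = 4 * π * (- (H 0 * ψ 0)) := by
    refine bp_polar (I3.add I4) ?_
    intro w hw
    have hn : ∀ r : ℝ, 0 < r → ‖r • w‖ = r := fun r hr => by
      rw [norm_smul, hw, mul_one, Real.norm_of_nonneg hr.le]
    have e : ∀ r ∈ Ioi (0:ℝ), r ^ 2 * (q ‖r • w‖ * ψ (r • w) + (H ‖r • w‖ / ‖r • w‖ ^ 2) / ‖r • w‖ *
        fderiv ℝ ψ (r • w) (r • w)) = r ^ 2 * q r * ψ (r • w) + H r * fderiv ℝ ψ (r • w) w := by
      intro r hr
      have hr' : r ≠ 0 := ne_of_gt hr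
      rw [hn r hr, map_smul, smul_eq_mul]
      field_simp
    refine (setIntegral_congr_fun measurableSet_Ioi e).trans ?_
    have hline : Continuous (fun r : ℝ => r • w) := by fun_prop
    have hwne : w ≠ 0 := by rintro rfl; simp at hw
    obtain ⟨R, hR⟩ := hc.isCompact.isBounded.subset_ball (0 : E3)
    have hz : ∀ r, max R 0 < r → ψ (r • w) = 0 ∧ fderiv ℝ ψ (r • w) = 0 := by
      intro r hr
      have hr0 : 0 < r := (le_max_right _ _).trans_lt hr
      have hnot : r • w ∉ tsupport ψ := fun h => by
        have := hR h
        rw [mem_ball_zero_iff, hn r hr0] at this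
        exact absurd ((le_max_left R 0).trans_lt hr) (not_lt.2 this.le)
      refine ⟨image_eq_zero_of_notMem_tsupport hnot, ?_⟩
      by_contra h
      exact hnot (support_fderiv_subset ℝ h)
    have hFT := integral_Ioi_of_hasDerivAt_of_tendsto (a := 0) (m := 0)
      (f := fun r : ℝ => H r * ψ (r • w))
      (f' := fun r => r ^ 2 * q r * ψ (r • w) + H r * fderiv ℝ ψ (r • w) w) ?_ ?_ ?_ ?_
    · rw [hFT]; simp
    · exact (hHc.mul (hψ.continuous.comp hline)).continuousWithinAt
    · intro r hr
      have h1 : HasDerivAt (fun r : ℝ => r • w) w r := by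
        simpa using (hasDerivAt_id r).smul_const w
      have h2 : HasDerivAt (fun r : ℝ => ψ (r • w)) (fderiv ℝ ψ (r • w) w) r :=
        ((hψ1.differentiable (by norm_num)) (r • w)).hasFDerivAt.comp_hasDerivAt r h1
      exact (hH r hr).mul h2
    · set R' := max R 0
      have hcont : ContinuousOn
          (fun r => r ^ 2 * q r * ψ (r • w) + H r * fderiv ℝ ψ (r • w) w) (Ioi 0) := by
        refine ((ContinuousOn.mul (by fun_prop) hqc).mul
          (hψ.continuous.comp hline).continuousOn).add (Continuous.continuousOn ?_)
        exact hHc.mul (((hψ1.continuous_fderiv (by norm_num)).comp hline).clm_apply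
          continuous_const)
      obtain ⟨M1, hM1⟩ := hψ.continuous.bounded_above_of_compact_support hc
      obtain ⟨M2, hM2⟩ := (hdi w).continuous.bounded_above_of_compact_support (hdic w)
      have hsub : IntegrableOn
          (fun r => r ^ 2 * q r * ψ (r • w) + H r * fderiv ℝ ψ (r • w) w) (Ioc 0 R') := by
        refine Integrable.of_bound
          ((hcont.mono Ioc_subset_Ioi_self).aestronglyMeasurable measurableSet_Ioc)
          (R' * D * M1 + C * M2) ?_
        filter_upwards [ae_restrict_mem measurableSet_Ioc] with r hr
        have hr0 : 0 < r := hr.1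
        have hM1' := hM1 (r • w)
        have hM2' := hM2 (r • w)
        rw [Real.norm_eq_abs] at hM1' hM2' ⊢
        refine (abs_add_le _ _).trans ?_
        rw [abs_mul, abs_mul, abs_mul, abs_of_pos (pow_pos hr0 2)]
        have hb1 : r ^ 2 * |q r| ≤ R' * D := by
          calc r ^ 2 * |q r| ≤ r ^ 2 * (D / r) := by gcongr; exact hqb r hr0
            _ = r * D := by field_simp
            _ ≤ _ := by gcongr; exact hr.2
        have := hHb r hr0
        have hR'0 : 0 ≤ R' := le_max_right _ _
        gcongr
      refine hsub.of_forall_sdiff_eq_zero measurableSet_Ioi ?_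
      intro r hr
      have : R' < r := by
        by_contra h
        exact hr.2 ⟨hr.1, not_lt.1 h⟩
      simp [hz r this]
    · refine tendsto_const_nhds.congr' ?_
      filter_upwards [eventually_gt_atTop (max R 0)] with r hr
      simp [hz r hr]
  rw [integral_add I3 I4] at step2
  rw [step1]
  linarith

lemma bp_lap_contDiff {f : E3 → ℝ} (hf : ContDiff ℝ (⊤ : ℕ∞) f) : ContDiff ℝ (⊤ : ℕ∞) (lap f) := by
  unfold lap
  refine ContDiff.sum fun i _ => ?_
  have h1 : ContDiff ℝ (⊤ : ℕ∞) (fun y => fderiv ℝ f y (EuclideanSpace.single i 1)) :=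
    (hf.fderiv_right (m := (⊤ : ℕ∞)) (by simp)).clm_apply contDiff_const
  exact (h1.fderiv_right (m := (⊤ : ℕ∞)) (by simp)).clm_apply contDiff_const

lemma bp_lap_support {f : E3 → ℝ} (hf : HasCompactSupport f) : HasCompactSupport (lap f) := by
  refine hf.mono' ?_
  intro x hx
  by_contra h
  apply hx
  unfold lap
  refine Finset.sum_eq_zero fun i _ => ?_
  have h2 : x ∉ tsupport (fun y => fderiv ℝ f y (EuclideanSpace.single i (1:ℝ))) := fun h' =>
    h (tsupport_fderiv_apply_subset ℝ _ h')
  have h3 : fderiv ℝ (fun y => fderiv ℝ f y (EuclideanSpace.single i (1:ℝ))) x = 0 := by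
    by_contra h4
    exact h2 (support_fderiv_subset ℝ h4)
  simp [h3]

/-- Fundamental solution of the Bopp–Podolsky operator, distributional form:
for every smooth compactly supported `φ`,
`∫ K_a(x) (-Δφ(x) + a² Δ²φ(x)) dx = 4π φ(0)`. -/
theorem boppPodolsky_fundamental_solution (a : ℝ) (ha : 0 < a)
    (φ : E3 → ℝ) (hφ : ContDiff ℝ (⊤ : ℕ∞) φ) (hφc : HasCompactSupport φ) :
    ∫ x, Ka a x * (-(lap φ x) + a ^ 2 * lap (lap φ) x) = 4 * Real.pi * φ 0 := by
  have hl := bp_lap_contDiff hφ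
  have hlc := bp_lap_support hφc
  have hll := bp_lap_contDiff hl
  have hllc := bp_lap_support hlc
  -- the Coulomb part
  have hA := bp_radial (g := fun r => 1 / r) (H := fun _ => -1) (q := fun _ => 0) (C := 1) (D := 0)
    (fun r hr => by
      have := (hasDerivAt_inv hr.ne')
      simp only [one_div]
      refine this.congr_deriv ?_
      ring) continuous_const
    (fun r hr => by simpa using hasDerivAt_const r (-1:ℝ)) continuousOn_const
    (fun r hr => by rw [abs_of_pos (by positivity)]) (fun r hr => by simp)
    (fun r hr => by simp) (hφ.of_le (WithTop.coe_le_coe.2 le_top)) hφc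
  -- the kernel
  have hexp : ∀ r : ℝ, HasDerivAt (fun r => Real.exp (-r / a)) (Real.exp (-r / a) * (-1 / a)) r :=
    fun r => ((hasDerivAt_id r).neg.div_const a).exp
  have hB := bp_radial (g := fun r => (1 - Real.exp (-r / a)) / r)
    (H := fun r => r / a * Real.exp (-r / a) - (1 - Real.exp (-r / a)))
    (q := fun r => - (1 / a ^ 2) * (Real.exp (-r / a) / r)) (C := 1) (D := 1 / a ^ 2)
    (fun r hr => by
      have := ((hexp r).const_sub 1).div (hasDerivAt_id r) hr.ne'
      refine this.congr_deriv ?_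
      simp only [id]
      field_simp)
    (by fun_prop)
    (fun r hr => by
      have := (((hasDerivAt_id r).div_const a).mul (hexp r)).sub ((hexp r).const_sub 1)
      refine this.congr_deriv ?_
      simp only [id]
      field_simp
      ring)
    (by
      refine ContinuousOn.mul continuousOn_const (ContinuousOn.div (by fun_prop) (by fun_prop) ?_)
      exact fun r hr => ne_of_gt hr)
    (fun r hr => by
      have h1 : Real.exp (-r / a) ≤ 1 := Real.exp_le_one_iff.2 (by
        rw [neg_div]; have : 0 < r / a := by positivity
        linarith)
      have h2 := Real.exp_pos (-r / a)
      rw [abs_div, abs_of_pos hr, abs_of_nonneg (by linarith)]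
      gcongr
      linarith)
    (fun r hr => by
      have h0 : 0 < r / a := by positivity
      have h2 := Real.exp_pos (-r / a)
      have h3 : (r / a + 1) * Real.exp (-r / a) ≤ 1 := by
        have := Real.add_one_le_exp (r / a)
        calc (r / a + 1) * Real.exp (-r / a) ≤ Real.exp (r / a) * Real.exp (-r / a) := by gcongr
          _ = 1 := by rw [← Real.exp_add]; simp [neg_div]
      rw [abs_le]
      constructor
      · nlinarith [mul_pos h0 h2]
      · nlinarith [mul_pos h0 h2])
    (fun r hr => by
      have h1 : Real.exp (-r / a) ≤ 1 := Real.exp_le_one_iff.2 (by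
        rw [neg_div]; have : 0 < r / a := by positivity
        linarith)
      have h2 := Real.exp_pos (-r / a)
      rw [abs_mul, abs_neg, abs_of_pos (by positivity), abs_of_pos (by positivity),
        div_eq_mul_one_div (1 / a ^ 2) r]
      gcongr)
    (hl.of_le (WithTop.coe_le_coe.2 le_top)) hlc
  have hKae : ∀ᵐ x : E3, Ka a x = (1 - Real.exp (-‖x‖ / a)) / ‖x‖ := by
    filter_upwards [bp_ae_ne] with x hx
    simp [Ka, hx]
  have hKb : ∀ x : E3, x ≠ 0 → |(1 - Real.exp (-‖x‖ / a)) / ‖x‖| ≤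
      1 * (1 / ‖x‖ + 1 / ‖x‖ ^ 2) := by
    intro x hx
    have hx' : 0 < ‖x‖ := norm_pos_iff.2 hx
    have h1 : Real.exp (-‖x‖ / a) ≤ 1 := Real.exp_le_one_iff.2 (by
        rw [neg_div]; have : 0 < ‖x‖ / a := by positivity
        linarith)
    have h2 := Real.exp_pos (-‖x‖ / a)
    rw [abs_div, abs_of_pos hx', abs_of_nonneg (by linarith), one_mul]
    calc (1 - Real.exp (-‖x‖ / a)) / ‖x‖ ≤ 1 / ‖x‖ := by gcongr; linarith
      _ ≤ _ := by simp
  have hYb : ∀ x : E3, x ≠ 0 → |Real.exp (-‖x‖ / a) / ‖x‖| ≤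
      1 * (1 / ‖x‖ + 1 / ‖x‖ ^ 2) := by
    intro x hx
    have hx' : 0 < ‖x‖ := norm_pos_iff.2 hx
    have h1 : Real.exp (-‖x‖ / a) ≤ 1 := Real.exp_le_one_iff.2 (by
        rw [neg_div]; have : 0 < ‖x‖ / a := by positivity
        linarith)
    have h2 := Real.exp_pos (-‖x‖ / a)
    rw [abs_of_pos (by positivity), one_mul]
    calc Real.exp (-‖x‖ / a) / ‖x‖ ≤ 1 / ‖x‖ := by gcongr
      _ ≤ _ := by simp
  have hKm : AEStronglyMeasurable (fun x : E3 => (1 - Real.exp (-‖x‖ / a)) / ‖x‖) volume := by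
    apply Measurable.aestronglyMeasurable
    fun_prop
  have hYm : AEStronglyMeasurable (fun x : E3 => Real.exp (-‖x‖ / a) / ‖x‖) volume := by
    apply Measurable.aestronglyMeasurable
    fun_prop
  have J1 := bp_integrable hKm hKb hl.continuous hlc
  have J2 := bp_integrable hKm hKb hll.continuous hllc
  have J3 := bp_integrable hYm hYb hl.continuous hlc
  have e1 : ∫ x, Ka a x * (-(lap φ x) + a ^ 2 * lap (lap φ) x) =
      ∫ x, (-((1 - Real.exp (-‖x‖ / a)) / ‖x‖ * lap φ x) +
        a ^ 2 * ((1 - Real.exp (-‖x‖ / a)) / ‖x‖ * lap (lap φ) x)) := by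
    refine integral_congr_ae ?_
    filter_upwards [hKae] with x hx
    rw [hx]
    ring
  have e2 : ∫ x, 1 / ‖x‖ * lap φ x = (∫ x, (1 - Real.exp (-‖x‖ / a)) / ‖x‖ * lap φ x) +
      ∫ x, Real.exp (-‖x‖ / a) / ‖x‖ * lap φ x := by
    rw [← integral_add J1 J3]
    congr 1
    ext x
    ring
  rw [e1, integral_add (by exact J1.neg) (J2.const_mul _), integral_neg, integral_const_mul, hB]
  simp only [mul_assoc, integral_const_mul]
  simp only [zero_mul, integral_zero, e2] at hA
  have ha2 : a ^ 2 * (1 / a ^ 2) = 1 := by field_simp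
  norm_num
  rw [← mul_assoc, mul_inv_cancel₀ (by positivity)]
  linarith
end
end

section
/- (Convolution identity relating the Coulomb, Yukawa and Bopp–Podolsky potentials.) Let a > 0. For every x ∈ ℝ³ with x ≠ 0, ∫_{ℝ³} exp(-‖y‖/a) / (‖x - y‖ · ‖y‖) dy = 4π a² (1 - exp(-‖x‖/a)) / ‖x‖. -/
open MeasureTheory Real
open scoped ENNReal

noncomputable section

lemma aux_polar (h : ℝ → ℝ≥0∞) (hh : Measurable h) :
    ∫⁻ w : ℝ × ℝ, h (w.1 ^ 2 + w.2 ^ 2) =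
      ENNReal.ofReal (2 * π) * ∫⁻ ρ : ℝ, ENNReal.ofReal ρ * h (ρ ^ 2) := by
  rw [← lintegral_comp_polarCoord_symm]
  have h1 : ∀ p : ℝ × ℝ, ENNReal.ofReal p.1 • h ((polarCoord.symm p).1 ^ 2 + (polarCoord.symm p).2 ^ 2)
      = (ENNReal.ofReal p.1 * h (p.1 ^ 2)) * 1 := by
    intro p
    rw [polarCoord_symm_apply]
    simp only [smul_eq_mul, mul_one]
    congr 2
    have := sin_sq_add_cos_sq p.2
    linear_combination p.1 ^ 2 * this
  simp_rw [h1]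
  rw [polarCoord_target, Measure.volume_eq_prod, ← Measure.prod_restrict,
    lintegral_prod_mul (f := fun ρ : ℝ => ENNReal.ofReal ρ * h (ρ ^ 2)) (g := fun _ : ℝ => 1)
      (by fun_prop) (by fun_prop), mul_comm]
  congr 1
  · simp only [lintegral_const, one_mul, Measure.restrict_apply_univ, Real.volume_Ioo]
    congr 1; ring
  · rw [← lintegral_indicator measurableSet_Ioi]
    congr 1
    ext ρ
    by_cases hρ : 0 < ρ
    · simp [hρ]
    · simp [hρ, ENNReal.ofReal_of_nonpos (not_lt.1 hρ)]

lemma aux_half (K : ℝ × ℝ → ℝ≥0∞) (hK : Measurable K) :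
    ∫⁻ z : ℝ, ∫⁻ ρ : ℝ, ENNReal.ofReal ρ * K (z, ρ) =
      ∫⁻ r in Set.Ioi (0 : ℝ), ∫⁻ θ in Set.Ioo 0 π,
        ENNReal.ofReal (r ^ 2 * sin θ) * K (r * cos θ, r * sin θ) := by
  have e1 : ∫⁻ z : ℝ, ∫⁻ ρ : ℝ, ENNReal.ofReal ρ * K (z, ρ) =
      ∫⁻ p : ℝ × ℝ, ENNReal.ofReal p.2 * K p := by
    rw [Measure.volume_eq_prod, lintegral_prod _ (by fun_prop)]
  rw [e1, ← lintegral_comp_polarCoord_symm, polarCoord_target, Measure.volume_eq_prod,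
    ← Measure.prod_restrict]
  simp_rw [polarCoord_symm_apply]
  rw [lintegral_prod _ (by fun_prop)]
  refine setLIntegral_congr_fun measurableSet_Ioi fun r hr => ?_
  have hr : 0 < r := hr
  have hsub : Set.Ioo 0 π ⊆ Set.Ioo (-π) π := Set.Ioo_subset_Ioo_left (by linarith [pi_pos])
  simp only
  rw [← Set.inter_eq_self_of_subset_left hsub,
    ← Measure.restrict_restrict (measurableSet_Ioo (a := (0 : ℝ)) (b := π)),
    ← lintegral_indicator (measurableSet_Ioo (a := (0 : ℝ)) (b := π))]
  refine setLIntegral_congr_fun measurableSet_Ioo fun θ hθ => ?_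
  simp only [smul_eq_mul]
  by_cases h0 : 0 < θ
  · rw [Set.indicator_of_mem (show θ ∈ Set.Ioo 0 π from ⟨h0, hθ.2⟩), ← mul_assoc,
      ← ENNReal.ofReal_mul hr.le]
    ring_nf
  · rw [Set.indicator_of_notMem (fun h => h0 h.1), ENNReal.ofReal_of_nonpos (p := r * sin θ)]
    · simp
    · have := sin_nonpos_of_nonpos_of_neg_pi_le (not_lt.1 h0) hθ.1.le
      nlinarith

lemma aux_coord (f : ℝ → ℝ → ℝ → ℝ≥0∞) (hf : Measurable (fun p : ℝ × ℝ × ℝ => f p.1 p.2.1 p.2.2)) :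
    ∫⁻ y : E3, f (y 0) (y 1) (y 2) = ∫⁻ z : ℝ, ∫⁻ w : ℝ × ℝ, f z w.1 w.2 := by
  have A := (EuclideanSpace.volume_preserving_symm_measurableEquiv_toLp (Fin 3))
  have B := volume_preserving_piFinSuccAbove (fun _ : Fin 3 => ℝ) 0
  have C := (MeasurePreserving.id (volume : Measure ℝ)).prod (volume_preserving_finTwoArrow ℝ)
  have D := (C.comp B).comp A
  have := D.lintegral_comp hf
  rw [lintegral_prod _ hf.aemeasurable] at this
  rw [← this]
  rfl

lemma aux_theta (r R : ℝ) (hr : 0 < r) (hR : 0 < R) (hne : r ≠ R) :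
    ∫⁻ θ in Set.Ioo 0 π, ENNReal.ofReal (sin θ / √(r ^ 2 + R ^ 2 - 2 * r * R * cos θ)) =
      ENNReal.ofReal (2 / max r R) := by
  have hpos : ∀ θ, 0 < r ^ 2 + R ^ 2 - 2 * r * R * cos θ := by
    intro θ
    have h1 := cos_le_one θ
    have h2 : 0 < (r - R) ^ 2 := by have := sub_ne_zero.2 hne; positivity
    have h3 : 0 < r * R := by positivity
    nlinarith
  have hc : Continuous fun θ => sin θ / √(r ^ 2 + R ^ 2 - 2 * r * R * cos θ) :=
    Continuous.div (by fun_prop) (by fun_prop) fun θ => (sqrt_pos.2 (hpos θ)).ne'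
  have key : ∫ θ in (0)..π, sin θ / √(r ^ 2 + R ^ 2 - 2 * r * R * cos θ) = 2 / max r R := by
    rw [intervalIntegral.integral_eq_sub_of_hasDerivAt
      (f := fun θ => √(r ^ 2 + R ^ 2 - 2 * r * R * cos θ) / (r * R))]
    · have e1 : r ^ 2 + R ^ 2 - 2 * r * R * cos π = (r + R) ^ 2 := by rw [cos_pi]; ring
      have e2 : r ^ 2 + R ^ 2 - 2 * r * R * cos 0 = (r - R) ^ 2 := by rw [cos_zero]; ring
      rw [e1, e2, sqrt_sq (by positivity), sqrt_sq_eq_abs]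
      rcases lt_or_gt_of_ne hne with h | h
      · rw [abs_of_neg (by linarith), max_eq_right h.le]; field_simp; ring
      · rw [abs_of_pos (by linarith), max_eq_left h.le]; field_simp; ring
    · intro θ _
      have h1 : HasDerivAt (fun θ => r ^ 2 + R ^ 2 - 2 * r * R * cos θ) (2 * r * R * sin θ) θ := by
        have := ((hasDerivAt_cos θ).const_mul (2 * r * R)).const_sub (r ^ 2 + R ^ 2)
        exact this.congr_deriv (by ring)
      refine ((h1.sqrt (hpos θ).ne').div_const (r * R)).congr_deriv ?_
      have := (sqrt_pos.2 (hpos θ)).ne'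
      field_simp
    · exact hc.intervalIntegrable _ _
  rw [← key, intervalIntegral.integral_of_le pi_pos.le, integral_Ioc_eq_integral_Ioo,
    ofReal_integral_eq_lintegral_ofReal]
  · exact (hc.integrableOn_Icc).mono_set Set.Ioo_subset_Icc_self
  · refine (ae_restrict_iff' measurableSet_Ioo).2 (Filter.Eventually.of_forall fun θ hθ => ?_)
    exact div_nonneg (sin_nonneg_of_nonneg_of_le_pi hθ.1.le hθ.2.le) (sqrt_nonneg _)

lemma aux_radial (a R : ℝ) (ha : 0 < a) (hR : 0 < R) :
    ∫⁻ r in Set.Ioi (0 : ℝ), ENNReal.ofReal (r * exp (-r / a) * (2 / max r R)) =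
      ENNReal.ofReal (2 * a ^ 2 * (1 - exp (-R / a)) / R) := by
  rw [← Set.Ioc_union_Ioi_eq_Ioi hR.le,
    lintegral_union measurableSet_Ioi (Set.Ioc_disjoint_Ioi le_rfl)]
  have h1 : ∫⁻ r in Set.Ioc 0 R, ENNReal.ofReal (r * exp (-r / a) * (2 / max r R)) =
      ENNReal.ofReal (2 / R * (a ^ 2 - (a * R + a ^ 2) * exp (-R / a))) := by
    have hc : Continuous fun r : ℝ => r * exp (-r / a) * (2 / R) := by fun_prop
    have e : ∫⁻ r in Set.Ioc 0 R, ENNReal.ofReal (r * exp (-r / a) * (2 / max r R)) =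
        ∫⁻ r in Set.Ioc 0 R, ENNReal.ofReal (r * exp (-r / a) * (2 / R)) :=
      setLIntegral_congr_fun measurableSet_Ioc fun r hr => by simp only [max_eq_right hr.2]
    have key : ∫ r in (0)..R, r * exp (-r / a) * (2 / R) =
        2 / R * (a ^ 2 - (a * R + a ^ 2) * exp (-R / a)) := by
      rw [intervalIntegral.integral_eq_sub_of_hasDerivAt
        (f := fun r => 2 / R * (- ((a * r + a ^ 2) * exp (-r / a))))]
      · simp; ring
      · intro r _
        have h1 : HasDerivAt (fun r : ℝ => exp (-r / a)) (exp (-r / a) * (-1 / a)) r :=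
          ((hasDerivAt_id r).neg.div_const a).exp
        have h2 : HasDerivAt (fun r : ℝ => a * r + a ^ 2) a r := by
          simpa using ((hasDerivAt_id r).const_mul a).add_const (a ^ 2)
        refine ((h2.mul h1).neg.const_mul (2 / R)).congr_deriv ?_
        field_simp
        ring
      · exact hc.intervalIntegrable _ _
    rw [e, ← key, intervalIntegral.integral_of_le hR.le, ofReal_integral_eq_lintegral_ofReal]
    · exact (hc.integrableOn_Icc).mono_set Set.Ioc_subset_Icc_self
    · refine (ae_restrict_iff' measurableSet_Ioc).2 (Filter.Eventually.of_forall fun r hr => ?_)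
      have := hr.1
      simp only [Pi.zero_apply]
      positivity
  have h2 : ∫⁻ r in Set.Ioi R, ENNReal.ofReal (r * exp (-r / a) * (2 / max r R)) =
      ENNReal.ofReal (2 * (a * exp (-R / a))) := by
    have e : ∫⁻ r in Set.Ioi R, ENNReal.ofReal (r * exp (-r / a) * (2 / max r R)) =
        ∫⁻ r in Set.Ioi R, ENNReal.ofReal (2 * exp (-a⁻¹ * r)) :=
      setLIntegral_congr_fun measurableSet_Ioi fun r hr => by
        have hr : R < r := hr
        have h0 : r ≠ 0 := by linarith
        simp only [max_eq_left hr.le]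
        congr 1
        rw [show -r / a = -a⁻¹ * r by ring]
        field_simp
    have hneg : -a⁻¹ < 0 := by simpa using ha
    rw [e, ← ofReal_integral_eq_lintegral_ofReal]
    · rw [integral_const_mul, integral_exp_mul_Ioi hneg]
      congr 2
      rw [show -a⁻¹ * R = -R / a by ring]
      field_simp
    · exact (integrableOn_exp_mul_Ioi hneg R).const_mul 2
    · exact Filter.Eventually.of_forall fun r => by simp only [Pi.zero_apply]; positivity
  rw [h1, h2, ← ENNReal.ofReal_add]
  · congr 1; field_simp; ring
  · have : (R / a + 1) * exp (-R / a) ≤ 1 := by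
      rw [neg_div, exp_neg, mul_inv_le_iff₀ (exp_pos _), one_mul]
      exact add_one_le_exp _
    have e : a ^ 2 - (a * R + a ^ 2) * exp (-R / a) = a ^ 2 * (1 - (R / a + 1) * exp (-R / a)) := by
      field_simp
    rw [e]
    have : 0 ≤ 1 - (R / a + 1) * exp (-R / a) := by linarith
    positivity
  · positivity

lemma aux_rot (x : E3) (F : ℝ → ℝ → ℝ≥0∞) :
    ∫⁻ y : E3, F ‖y‖ ‖x - y‖ =
      ∫⁻ y : E3, F ‖y‖ ‖(EuclideanSpace.single 0 ‖x‖ : E3) - y‖ := by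
  set e : E3 := EuclideanSpace.single 0 ‖x‖ with he
  have hn : ‖x‖ = ‖e‖ := by simp [he]
  let T := (Submodule.span ℝ {x - e})ᗮ.reflection
  have hT : T x = e := Submodule.reflection_sub hn
  symm
  rw [← T.measurePreserving.lintegral_comp_emb T.toMeasurableEquiv.measurableEmbedding]
  refine lintegral_congr fun y => ?_
  rw [← hT, ← map_sub, T.norm_map, T.norm_map]

/-- The integrand in cylindrical coordinates. -/
def cylInt (a R z s : ℝ) : ℝ≥0∞ :=
  ENNReal.ofReal (exp (-√(z ^ 2 + s) / a) / (√((R - z) ^ 2 + s) * √(z ^ 2 + s)))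

lemma measurable_cylInt (a R : ℝ) : Measurable fun p : ℝ × ℝ => cylInt a R p.1 p.2 := by
  unfold cylInt; fun_prop

lemma aux_main (a : ℝ) (ha : 0 < a) (x : E3) (hx : x ≠ 0) :
    ∫⁻ y : E3, ENNReal.ofReal (exp (-‖y‖ / a) / (‖x - y‖ * ‖y‖)) =
      ENNReal.ofReal (4 * π * a ^ 2 * (1 - exp (-‖x‖ / a)) / ‖x‖) := by
  rw [aux_rot x fun s t => ENNReal.ofReal (exp (-s / a) / (t * s))]
  have hR : 0 < ‖x‖ := norm_pos_iff.2 hx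
  generalize ‖x‖ = R at hR
  obtain ⟨h, hh⟩ : ∃ h, h = cylInt a R := ⟨_, rfl⟩
  have hm : Measurable fun p : ℝ × ℝ => h p.1 p.2 := by rw [hh]; exact measurable_cylInt a R
  have e1 : ∀ y : E3, ENNReal.ofReal (exp (-‖y‖ / a) /
      (‖(EuclideanSpace.single 0 R : E3) - y‖ * ‖y‖)) = h (y 0) ((y 1) ^ 2 + (y 2) ^ 2) := by
    intro y
    simp [hh, cylInt, EuclideanSpace.norm_eq, Fin.sum_univ_three, add_assoc]
  simp_rw [e1]
  rw [aux_coord (fun z p q => h z (p ^ 2 + q ^ 2))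
    (hm.comp (g := fun p : ℝ × ℝ => h p.1 p.2)
      (f := fun p : ℝ × ℝ × ℝ => (p.1, p.2.1 ^ 2 + p.2.2 ^ 2)) (by fun_prop))]
  have e2 : ∀ z, ∫⁻ w : ℝ × ℝ, h z (w.1 ^ 2 + w.2 ^ 2) =
      ENNReal.ofReal (2 * π) * ∫⁻ ρ : ℝ, ENNReal.ofReal ρ * h z (ρ ^ 2) := fun z =>
    aux_polar (h z) (hm.comp measurable_prodMk_left)
  simp_rw [e2]
  rw [lintegral_const_mul' _ _ ENNReal.ofReal_ne_top,
    aux_half (fun p => h p.1 (p.2 ^ 2))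
      (hm.comp (g := fun p : ℝ × ℝ => h p.1 p.2)
      (f := fun p : ℝ × ℝ => (p.1, p.2 ^ 2)) (by fun_prop))]
  have e3 : ∫⁻ r in Set.Ioi (0 : ℝ), ∫⁻ θ in Set.Ioo 0 π,
        ENNReal.ofReal (r ^ 2 * sin θ) * h (r * cos θ) ((r * sin θ) ^ 2) =
      ∫⁻ r in Set.Ioi (0 : ℝ), ENNReal.ofReal (r * exp (-r / a) * (2 / max r R)) := by
    refine lintegral_congr_ae ?_
    have hne : ∀ᵐ r ∂(volume.restrict (Set.Ioi (0 : ℝ))), r ≠ R := by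
      refine ae_restrict_of_ae ?_
      simp [ae_iff]
    filter_upwards [hne, ae_restrict_mem measurableSet_Ioi] with r hr1 hr2
    have hr : 0 < r := hr2
    rw [ENNReal.ofReal_mul (by positivity), ← aux_theta r R hr hR hr1,
      ← lintegral_const_mul' _ _ ENNReal.ofReal_ne_top]
    refine setLIntegral_congr_fun measurableSet_Ioo fun θ hθ => ?_
    have hs : 0 ≤ sin θ := sin_nonneg_of_nonneg_of_le_pi hθ.1.le hθ.2.le
    have q1 : (r * cos θ) ^ 2 + (r * sin θ) ^ 2 = r ^ 2 := by
      linear_combination r ^ 2 * sin_sq_add_cos_sq θ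
    have q2 : (R - r * cos θ) ^ 2 + (r * sin θ) ^ 2 = r ^ 2 + R ^ 2 - 2 * r * R * cos θ := by
      linear_combination r ^ 2 * sin_sq_add_cos_sq θ
    simp only [hh, cylInt]
    rw [q1, q2, sqrt_sq hr.le, ← ENNReal.ofReal_mul (by positivity),
      ← ENNReal.ofReal_mul (by positivity)]
    congr 1
    by_cases hz : √(r ^ 2 + R ^ 2 - 2 * r * R * cos θ) = 0
    · simp [hz]
    · field_simp
  rw [e3, aux_radial a R ha hR, ← ENNReal.ofReal_mul (by positivity)]
  congr 1
  ring

/-- Convolution identity relating the Coulomb, Yukawa and Bopp–Podolsky potentials: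
for `a > 0` and `x ≠ 0`,
`∫ exp(-‖y‖/a) / (‖x - y‖ ‖y‖) dy = 4π a² (1 - exp(-‖x‖/a)) / ‖x‖`. -/
theorem coulomb_conv_yukawa (a : ℝ) (ha : 0 < a) (x : E3) (hx : x ≠ 0) :
    ∫ y : E3, Real.exp (-‖y‖ / a) / (‖x - y‖ * ‖y‖) =
      4 * Real.pi * a ^ 2 * (1 - Real.exp (-‖x‖ / a)) / ‖x‖ := by
  rw [integral_eq_lintegral_of_nonneg_ae
    (Filter.Eventually.of_forall fun y => by simp only [Pi.zero_apply]; positivity)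
    (Measurable.aestronglyMeasurable (by fun_prop)), aux_main a ha x hx, ENNReal.toReal_ofReal]
  have h1 : exp (-‖x‖ / a) ≤ 1 := by
    rw [exp_le_one_iff, neg_div, neg_nonpos]
    positivity
  have h2 : 0 ≤ 1 - exp (-‖x‖ / a) := by linarith
  positivity
end
end

section
/- (Finite Bopp–Podolsky energy implies local integrability.) Let K : ℝ³ → ℝ be defined by K(x) = (1 - exp(-‖x‖))/‖x‖ for x ≠ 0 and K(0) = 1, and set V(f,f) = ∫_{ℝ³}∫_{ℝ³} K(x-y) f(x) f(y) dx dy. If f : ℝ³ → [0,∞) is measurable and V(f,f) < ∞, then f is locally integrable on ℝ³. -/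
open MeasureTheory Real
open scoped ENNReal Classical

noncomputable section

/-- Bopp–Podolsky kernel with `a = 1`. -/
def K1 (x : E3) : ℝ := if x = 0 then 1 else (1 - Real.exp (-‖x‖)) / ‖x‖

/-- Bopp–Podolsky energy as an iterated lower integral, valued in `[0,∞]`. -/
def Vlin (f g : E3 → ℝ) : ℝ≥0∞ :=
  ∫⁻ x, ∫⁻ y, ENNReal.ofReal (K1 (x - y) * f x * g y)

/-- Bopp–Podolsky energy as an iterated Bochner integral. -/
def Vr (f g : E3 → ℝ) : ℝ := ∫ x, ∫ y, K1 (x - y) * f x * g y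

/-- `G` is the weak gradient of `u`. -/
def IsWeakGradient (u : E3 → ℝ) (G : E3 → E3) : Prop :=
  ∀ φ : E3 → ℝ, ContDiff ℝ (⊤ : ℕ∞) φ → HasCompactSupport φ → ∀ i : Fin 3,
    ∫ x, u x * fderiv ℝ φ x (EuclideanSpace.single i 1) = -∫ x, G x i * φ x

/-- `h` is the weak Laplacian of `u`. -/
def IsWeakLaplacian (u : E3 → ℝ) (h : E3 → ℝ) : Prop :=
  ∀ φ : E3 → ℝ, ContDiff ℝ (⊤ : ℕ∞) φ → HasCompactSupport φ →
    ∫ x, u x * lap φ x = ∫ x, h x * φ x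

lemma K1_lower (z : E3) (hz : ‖z‖ ≤ 2) : 1 / 3 ≤ K1 z := by
  unfold K1
  split_ifs with h
  · norm_num
  · have hp : 0 < ‖z‖ := norm_pos_iff.mpr h
    have h1 : ‖z‖ + 1 ≤ Real.exp ‖z‖ := Real.add_one_le_exp _
    have h2 : Real.exp (-‖z‖) * Real.exp ‖z‖ = 1 := by
      rw [← Real.exp_add]; simp
    have h3 : 0 < Real.exp (-‖z‖) := Real.exp_pos _
    rw [le_div_iff₀ hp]
    have h4 : Real.exp (-‖z‖) * (‖z‖ + 1) ≤ 1 := by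
      exact (mul_le_mul_of_nonneg_left h1 h3.le).trans h2.le
    have h5 : Real.exp (-‖z‖) ≤ 1 / (‖z‖ + 1) := by
      rw [le_div_iff₀ (by linarith)]; exact h4
    have h6 : 1 / (‖z‖ + 1) ≤ 1 - 1 / 3 * ‖z‖ := by
      rw [div_le_iff₀ (by linarith)]; nlinarith
    linarith

/-- Finite Bopp–Podolsky energy implies local integrability. -/
theorem finite_energy_locallyIntegrable (f : E3 → ℝ) (hf : Measurable f)
    (hf0 : ∀ x, 0 ≤ f x) (hV : Vlin f f < ⊤) :
    LocallyIntegrable f volume := by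
  intro x₀
  refine ⟨Metric.ball x₀ 1, Metric.ball_mem_nhds x₀ one_pos, ?_⟩
  set B := Metric.ball x₀ 1 with hB
  have hBm : MeasurableSet B := Metric.isOpen_ball.measurableSet
  set F : E3 → ℝ≥0∞ := fun x => ENNReal.ofReal (f x) with hF
  have hFm : Measurable F := hf.ennreal_ofReal
  have key : ENNReal.ofReal (1 / 3) * ((∫⁻ x in B, F x) * (∫⁻ x in B, F x)) ≤ Vlin f f := by
    calc ENNReal.ofReal (1 / 3) * ((∫⁻ x in B, F x) * (∫⁻ x in B, F x))
        = ∫⁻ x in B, ∫⁻ y in B, ENNReal.ofReal (1 / 3) * (F x * F y) := by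
          have h1 : ∀ x, ∫⁻ y in B, ENNReal.ofReal (1 / 3) * (F x * F y)
              = ENNReal.ofReal (1 / 3) * (F x * ∫⁻ y in B, F y) := by
            intro x
            rw [lintegral_const_mul _ (hFm.const_mul _), lintegral_const_mul _ hFm]
          simp_rw [h1]
          rw [lintegral_const_mul _ (hFm.mul_const _), lintegral_mul_const _ hFm]
      _ ≤ ∫⁻ x in B, ∫⁻ y in B, ENNReal.ofReal (K1 (x - y) * f x * f y) := by
          refine setLIntegral_mono' hBm fun x hx => setLIntegral_mono' hBm fun y hy => ?_
          simp only [hF]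
          rw [← ENNReal.ofReal_mul (hf0 x), ← ENNReal.ofReal_mul (by norm_num)]
          refine ENNReal.ofReal_le_ofReal ?_
          rw [mul_assoc]
          refine mul_le_mul_of_nonneg_right (K1_lower _ ?_) (mul_nonneg (hf0 x) (hf0 y))
          rw [← dist_eq_norm]
          have := dist_triangle_right x y x₀
          have hx' := Metric.mem_ball.mp hx
          have hy' := Metric.mem_ball.mp hy
          linarith
      _ ≤ ∫⁻ x in B, ∫⁻ y, ENNReal.ofReal (K1 (x - y) * f x * f y) :=
          lintegral_mono fun x => setLIntegral_le_lintegral _ _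
      _ ≤ Vlin f f := setLIntegral_le_lintegral _ _
  have hA : (∫⁻ x in B, F x) < ⊤ := by
    by_contra hcon
    have htop : (∫⁻ x in B, F x) = ⊤ := not_lt_top_iff.mp hcon
    rw [htop, ENNReal.top_mul_top, ENNReal.mul_top (by simp)] at key
    exact absurd hV (not_lt.mpr key)
  refine ⟨hf.aestronglyMeasurable, ?_⟩
  rw [hasFiniteIntegral_iff_ofReal (Filter.Eventually.of_forall hf0)]
  exact hA
end
end

section
/- (Nonnegativity of the Bopp–Podolsky energy.) Let K : ℝ³ → ℝ be defined by K(x) = (1 - exp(-‖x‖))/‖x‖ for x ≠ 0 and K(0) = 1, and set V(f,f) = ∫_{ℝ³}∫_{ℝ³} K(x-y) f(x) f(y) dx dy. If f : ℝ³ → ℝ is measurable and V(|f|,|f|) < ∞, then V(f,f) ≥ 0. -/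
open MeasureTheory Real
open scoped ENNReal Classical

noncomputable section

theorem abs_pd {Ω : Type*} [MeasurableSpace Ω] (ν : Measure Ω) [SFinite ν] (w : Ω → ℝ)
    (hw : ∀ ω, 0 ≤ w ω) (hwm : Measurable w) (h : Ω → E3 → ℝ) (hh : ∀ ω x, 0 ≤ h ω x)
    (hm : Measurable (Function.uncurry h)) (K : E3 → E3 → ℝ)
    (hK : ∀ x y, x ≠ y → Integrable (fun ω => w ω * (h ω x * h ω y)) ν ∧
      ∫ ω, w ω * (h ω x * h ω y) ∂ν = K x y)
    (f : E3 → ℝ) (hf : Measurable f)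
    (hi : Integrable (fun p : E3 × E3 => K p.1 p.2 * f p.1 * f p.2) (volume.prod volume)) :
    0 ≤ ∫ x, ∫ y, K x y * f x * f y := by
  have hne : ∀ᵐ p : E3 × E3 ∂(volume.prod volume), p.1 ≠ p.2 := by
    have hms : MeasurableSet {p : E3 × E3 | p.1 ≠ p.2} :=
      (measurableSet_eq_fun measurable_fst measurable_snd).compl
    rw [Measure.ae_prod_iff_ae_ae hms]
    refine Filter.Eventually.of_forall fun x => ?_
    have : ∀ᵐ y : E3, y ≠ x := by simp [ae_iff]
    filter_upwards [this] with y hy using hy.symm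
  let F : Ω × (E3 × E3) → ℝ := fun q =>
    w q.1 * ((h q.1 q.2.1 * f q.2.1) * (h q.1 q.2.2 * f q.2.2))
  have h1 : Measurable fun q : Ω × (E3 × E3) => h q.1 q.2.1 :=
    hm.comp (measurable_fst.prodMk (measurable_fst.comp measurable_snd))
  have h2 : Measurable fun q : Ω × (E3 × E3) => h q.1 q.2.2 :=
    hm.comp (measurable_fst.prodMk (measurable_snd.comp measurable_snd))
  have hFm : Measurable F := by
    have : Measurable fun q : Ω × (E3 × E3) => w q.1 := hwm.comp measurable_fst
    have h3 : Measurable fun q : Ω × (E3 × E3) => f q.2.1 := by fun_prop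
    have h4 : Measurable fun q : Ω × (E3 × E3) => f q.2.2 := by fun_prop
    exact this.mul ((h1.mul h3).mul (h2.mul h4))
  have hFe : ∀ ω (p : E3 × E3), F (ω, p) = (f p.1 * f p.2) * (w ω * (h ω p.1 * h ω p.2)) := by
    intro ω p; simp only [F]; ring
  have hFint : Integrable F (ν.prod (volume.prod volume)) := by
    rw [integrable_prod_iff' hFm.aestronglyMeasurable]
    constructor
    · filter_upwards [hne] with p hp
      simp only [hFe]
      exact (hK _ _ hp).1.const_mul _
    · refine hi.norm.congr ?_
      filter_upwards [hne] with p hp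
      have : ∀ ω, ‖F (ω, p)‖ = |f p.1 * f p.2| * (w ω * (h ω p.1 * h ω p.2)) := by
        intro ω
        rw [hFe, Real.norm_eq_abs, abs_mul,
          abs_of_nonneg (mul_nonneg (hw ω) (mul_nonneg (hh ω _) (hh ω _)))]
      simp only [this]
      have hKn : 0 ≤ K p.1 p.2 := by
        rw [← (hK _ _ hp).2]
        exact integral_nonneg fun ω => mul_nonneg (hw ω) (mul_nonneg (hh ω _) (hh ω _))
      rw [integral_const_mul, (hK _ _ hp).2, Real.norm_eq_abs, mul_assoc, abs_mul,
        abs_of_nonneg hKn, mul_comm]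
  have e1 : ∫ x, ∫ y, K x y * f x * f y =
      ∫ p : E3 × E3, K p.1 p.2 * f p.1 * f p.2 ∂(volume.prod volume) :=
    (integral_prod (fun p : E3 × E3 => K p.1 p.2 * f p.1 * f p.2) hi).symm
  have e2 : ∫ p : E3 × E3, K p.1 p.2 * f p.1 * f p.2 ∂(volume.prod volume) =
      ∫ p : E3 × E3, ∫ ω, F (ω, p) ∂ν ∂(volume.prod volume) := by
    refine integral_congr_ae ?_
    filter_upwards [hne] with p hp
    simp only [hFe]
    rw [integral_const_mul, (hK _ _ hp).2]; ring
  rw [e1, e2, ← integral_prod_symm F hFint, integral_prod F hFint]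
  refine integral_nonneg fun ω => ?_
  have : ∫ p : E3 × E3, F (ω, p) ∂(volume.prod volume) =
      w ω * ((∫ x, h ω x * f x) * (∫ x, h ω x * f x)) := by
    simp only [F]
    rw [integral_const_mul, integral_prod_mul (fun x => h ω x * f x) (fun x => h ω x * f x)]
  simp only [Pi.zero_apply]
  rw [this]
  exact mul_nonneg (hw ω) (mul_self_nonneg _)

theorem schlomilch (r c : ℝ) (hr : 0 < r) (hc : 0 < c) :
    IntegrableOn (fun u : ℝ => Real.exp (-(r * u - c / u) ^ 2)) (Set.Ioi 0) ∧
      ∫ u in Set.Ioi (0 : ℝ), Real.exp (-(r * u - c / u) ^ 2) = √π / (2 * r) := by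
  set g : ℝ → ℝ := fun u => Real.exp (-(r * u - c / u) ^ 2) with hg
  have hd : ∀ u ∈ Set.Ioi (0 : ℝ),
      HasDerivWithinAt (fun u : ℝ => r * u - c / u) (r + c / u ^ 2) (Set.Ioi 0) u := by
    intro u hu
    have hu' : u ≠ 0 := ne_of_gt hu
    have h1 := ((hasDerivAt_id u).const_mul r).sub ((hasDerivAt_inv hu').const_mul c)
    refine (h1.congr_deriv ?_).hasDerivWithinAt
    field_simp
    ring
  have hmono : StrictMonoOn (fun u : ℝ => r * u - c / u) (Set.Ioi 0) := by
    intro a ha b hb hab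
    have h1 : c / b < c / a := div_lt_div_of_pos_left hc ha hab
    have h2 : r * a < r * b := mul_lt_mul_of_pos_left hab hr
    simp only
    linarith
  have himg : (fun u : ℝ => r * u - c / u) '' Set.Ioi 0 = Set.univ := by
    refine Set.eq_univ_of_forall fun v => ?_
    have hs : 0 ≤ v ^ 2 + 4 * r * c := by positivity
    have hsq := Real.sq_sqrt hs
    have hpos : 0 < v + √(v ^ 2 + 4 * r * c) := by
      have : |v| < √(v ^ 2 + 4 * r * c) := by
        rw [← Real.sqrt_sq_eq_abs]
        exact Real.sqrt_lt_sqrt (sq_nonneg v) (by have := mul_pos hr hc; linarith)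
      linarith [neg_abs_le v]
    refine ⟨(v + √(v ^ 2 + 4 * r * c)) / (2 * r), div_pos hpos (by positivity), ?_⟩
    simp only
    generalize √(v ^ 2 + 4 * r * c) = t at hsq hpos
    have hne : v + t ≠ 0 := hpos.ne'
    field_simp
    nlinarith
  have hgauss : Integrable fun v : ℝ => Real.exp (-v ^ 2) := by
    simpa using integrable_exp_neg_mul_sq (b := 1) one_pos
  have hgaussI : ∫ v : ℝ, Real.exp (-v ^ 2) = √π := by
    simpa using integral_gaussian 1
  have habs : ∀ u : ℝ, |r + c / u ^ 2| = r + c / u ^ 2 := fun u => abs_of_nonneg (by positivity)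
  have hA := (integrableOn_image_iff_integrableOn_abs_deriv_smul measurableSet_Ioi hd
    hmono.injOn (fun v => Real.exp (-v ^ 2))).1 (by rw [himg]; exact hgauss.integrableOn)
  have hAI := integral_image_eq_integral_abs_deriv_smul measurableSet_Ioi hd
    hmono.injOn (fun v => Real.exp (-v ^ 2))
  rw [himg, setIntegral_univ, hgaussI] at hAI
  simp only [habs, smul_eq_mul] at hA hAI
  change IntegrableOn (fun u => (r + c / u ^ 2) * g u) _ at hA
  change _ = ∫ u in Set.Ioi 0, (r + c / u ^ 2) * g u at hAI
  have hgm : Measurable g := by rw [hg]; fun_prop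
  have hgi : IntegrableOn g (Set.Ioi 0) := by
    refine Integrable.mono' (hA.const_mul (1 / r)) hgm.aestronglyMeasurable ?_
    refine Filter.Eventually.of_forall fun u => ?_
    have hgp : 0 < g u := Real.exp_pos _
    rw [Real.norm_eq_abs, abs_of_pos hgp]
    have : 0 ≤ c / u ^ 2 := by positivity
    rw [← mul_assoc]
    refine le_mul_of_one_le_left hgp.le ?_
    rw [one_div_mul_eq_div, le_div_iff₀ hr]; linarith
  have hd2 : ∀ u ∈ Set.Ioi (0 : ℝ),
      HasDerivWithinAt (fun u : ℝ => c / r * u⁻¹) (-(c / r / u ^ 2)) (Set.Ioi 0) u := by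
    intro u hu
    have hu' : u ≠ 0 := ne_of_gt hu
    refine (((hasDerivAt_inv hu').const_mul (c / r)).congr_deriv ?_).hasDerivWithinAt
    field_simp
  have hinj2 : Set.InjOn (fun u : ℝ => c / r * u⁻¹) (Set.Ioi 0) := by
    intro a _ b _ hab
    exact inv_injective (mul_left_cancel₀ (by positivity) hab)
  have himg2 : (fun u : ℝ => c / r * u⁻¹) '' Set.Ioi 0 = Set.Ioi 0 := by
    ext v
    constructor
    · rintro ⟨u, hu, rfl⟩
      have : 0 < u := hu
      exact Set.mem_Ioi.2 (by positivity)
    · intro hv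
      have hv' : 0 < v := hv
      exact ⟨c / r * v⁻¹, Set.mem_Ioi.2 (by positivity), by field_simp⟩
  have hB := integral_image_eq_integral_abs_deriv_smul measurableSet_Ioi hd2 hinj2 g
  rw [himg2] at hB
  have hB' : ∫ u in Set.Ioi 0, g u = ∫ u in Set.Ioi 0, r⁻¹ * (c / u ^ 2 * g u) := by
    rw [hB]
    refine setIntegral_congr_fun measurableSet_Ioi fun u hu => ?_
    have hu' : u ≠ 0 := ne_of_gt hu
    have e1 : g (c / r * u⁻¹) = g u := by
      simp only [hg]
      congr 2
      field_simp
      ring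
    simp only [smul_eq_mul]
    rw [e1, abs_neg, abs_of_nonneg (by positivity)]
    field_simp
  rw [integral_const_mul] at hB'
  have hci : IntegrableOn (fun u => c / u ^ 2 * g u) (Set.Ioi 0) := by
    refine (Integrable.sub hA (hgi.const_mul r)).congr ?_
    exact Filter.Eventually.of_forall fun u => by simp only [Pi.sub_apply]; ring
  have hsum : ∫ u in Set.Ioi 0, (r + c / u ^ 2) * g u =
      r * (∫ u in Set.Ioi 0, g u) + ∫ u in Set.Ioi 0, c / u ^ 2 * g u := by
    rw [← integral_const_mul, ← integral_add (hgi.const_mul r) hci]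
    congr 1; ext u; ring
  refine ⟨hgi, ?_⟩
  have h3 : ∫ u in Set.Ioi 0, c / u ^ 2 * g u = r * ∫ u in Set.Ioi 0, g u := by
    rw [hB']; field_simp
  rw [hsum, h3] at hAI
  rw [hAI]; field_simp; ring

def wt (u : ℝ) : ℝ := 2 / √π * (1 - Real.exp (-(1 / (4 * u ^ 2))))

theorem wt_nonneg (u : ℝ) : 0 ≤ wt u := by
  have : Real.exp (-(1 / (4 * u ^ 2))) ≤ 1 := Real.exp_le_one_iff.2 (neg_nonpos.2 (by positivity))
  exact mul_nonneg (by positivity) (by linarith)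

theorem kernel_repr (r : ℝ) (hr : 0 < r) :
    IntegrableOn (fun u : ℝ => wt u * Real.exp (-(u ^ 2 * r ^ 2))) (Set.Ioi 0) ∧
      ∫ u in Set.Ioi (0 : ℝ), wt u * Real.exp (-(u ^ 2 * r ^ 2)) = (1 - Real.exp (-r)) / r := by
  obtain ⟨h1, h2⟩ := schlomilch r (1 / 2) hr (by norm_num)
  have h3 : IntegrableOn (fun u : ℝ => Real.exp (-r ^ 2 * u ^ 2)) (Set.Ioi 0) :=
    (integrable_exp_neg_mul_sq (by positivity)).integrableOn
  have h4 := integral_gaussian_Ioi (r ^ 2)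
  have h5 : √(π / r ^ 2) = √π / r := by
    rw [Real.sqrt_div pi_pos.le, Real.sqrt_sq hr.le]
  rw [h5] at h4
  have key : Set.EqOn (fun u : ℝ => 2 / √π * (Real.exp (-r ^ 2 * u ^ 2) -
      Real.exp (-r) * Real.exp (-(r * u - 1 / 2 / u) ^ 2)))
      (fun u : ℝ => wt u * Real.exp (-(u ^ 2 * r ^ 2))) (Set.Ioi 0) := by
    intro u hu
    have hu' : u ≠ 0 := ne_of_gt hu
    simp only [wt]
    rw [mul_assoc, sub_mul, one_mul, ← Real.exp_add, ← Real.exp_add]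
    congr 3
    · ring
    · field_simp; ring
  have h6 := (Integrable.sub h3 (h1.const_mul (Real.exp (-r)))).const_mul (2 / √π)
  refine ⟨IntegrableOn.congr_fun h6 key measurableSet_Ioi, ?_⟩
  rw [← setIntegral_congr_fun measurableSet_Ioi key, integral_const_mul,
    integral_sub h3 (h1.const_mul (Real.exp (-r))), integral_const_mul, h2, h4]
  have : √π ≠ 0 := by positivity
  field_simp

def Cg (u : ℝ) : ℝ := (π / (4 * u ^ 2)) ^ (3 / 2 : ℝ)

theorem gauss_conv (u : ℝ) (hu : 0 < u) (x y : E3) :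
    Integrable (fun z : E3 => Real.exp (-(2 * u ^ 2) * ‖x - z‖ ^ 2) *
        Real.exp (-(2 * u ^ 2) * ‖y - z‖ ^ 2)) ∧
      ∫ z : E3, Real.exp (-(2 * u ^ 2) * ‖x - z‖ ^ 2) * Real.exp (-(2 * u ^ 2) * ‖y - z‖ ^ 2) =
        Cg u * Real.exp (-(u ^ 2 * ‖x - y‖ ^ 2)) := by
  have e : ∀ z : E3, Real.exp (-(2 * u ^ 2) * ‖x - z‖ ^ 2) *
      Real.exp (-(2 * u ^ 2) * ‖y - z‖ ^ 2) =
      Real.exp (-(4 * u ^ 2) * ‖z - (1 / 2 : ℝ) • (x + y)‖ ^ 2) *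
        Real.exp (-(u ^ 2 * ‖x - y‖ ^ 2)) := by
    intro z
    rw [← Real.exp_add, ← Real.exp_add]
    congr 1
    have h1 := parallelogram_law_with_norm ℝ (x - z) (y - z)
    have h2 : (x - z) + (y - z) = (-2 : ℝ) • (z - (1 / 2 : ℝ) • (x + y)) := by
      module
    have h3 : (x - z) - (y - z) = x - y := by abel
    rw [h2, h3, norm_smul, Real.norm_eq_abs] at h1
    norm_num at h1
    have h4 : ‖x - z‖ ^ 2 + ‖y - z‖ ^ 2 =
        2 * ‖z - (1 / 2 : ℝ) • (x + y)‖ ^ 2 + ‖x - y‖ ^ 2 / 2 := by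
      norm_num
      linarith
    linear_combination (-(2 * u ^ 2)) * h4
  have hb : 0 < 4 * u ^ 2 := by positivity
  have hI := GaussianFourier.integral_rexp_neg_mul_sq_norm (V := E3) hb
  have hi : Integrable fun z : E3 => Real.exp (-(4 * u ^ 2) * ‖z‖ ^ 2) := by
    by_contra hcon
    rw [integral_undef hcon] at hI
    have : 0 < (π / (4 * u ^ 2)) ^ ((Module.finrank ℝ E3 : ℝ) / 2) := by positivity
    linarith
  simp only [e]
  constructor
  · exact (hi.comp_sub_right ((1 / 2 : ℝ) • (x + y))).mul_const _
  · rw [integral_mul_const, integral_sub_right_eq_self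
      (fun z : E3 => Real.exp (-(4 * u ^ 2) * ‖z‖ ^ 2)), hI]
    simp [Cg]

theorem K1_repr (x y : E3) (hxy : x ≠ y) :
    Integrable (fun ω : ℝ × E3 => (wt ω.1 * (Cg ω.1)⁻¹) *
      (Real.exp (-(2 * ω.1 ^ 2) * ‖x - ω.2‖ ^ 2) * Real.exp (-(2 * ω.1 ^ 2) * ‖y - ω.2‖ ^ 2)))
      ((volume.restrict (Set.Ioi (0 : ℝ))).prod volume) ∧
    ∫ ω : ℝ × E3, (wt ω.1 * (Cg ω.1)⁻¹) *
      (Real.exp (-(2 * ω.1 ^ 2) * ‖x - ω.2‖ ^ 2) * Real.exp (-(2 * ω.1 ^ 2) * ‖y - ω.2‖ ^ 2))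
      ∂((volume.restrict (Set.Ioi (0 : ℝ))).prod volume) = K1 (x - y) := by
  have hr : 0 < ‖x - y‖ := norm_pos_iff.2 (sub_ne_zero.2 hxy)
  obtain ⟨k1, k2⟩ := kernel_repr _ hr
  have hin : ∀ᵐ u : ℝ ∂(volume.restrict (Set.Ioi (0 : ℝ))),
      ∫ z : E3, (wt u * (Cg u)⁻¹) * (Real.exp (-(2 * u ^ 2) * ‖x - z‖ ^ 2) *
        Real.exp (-(2 * u ^ 2) * ‖y - z‖ ^ 2)) = wt u * Real.exp (-(u ^ 2 * ‖x - y‖ ^ 2)) := by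
    filter_upwards [ae_restrict_mem measurableSet_Ioi] with u hu
    have hu' : 0 < u := hu
    have hC : 0 < Cg u := by unfold Cg; positivity
    rw [integral_const_mul, (gauss_conv u hu x y).2]
    field_simp
  have hwC : ∀ u, 0 ≤ wt u * (Cg u)⁻¹ := fun u =>
    mul_nonneg (wt_nonneg u) (inv_nonneg.2 (by unfold Cg; positivity))
  have hint : Integrable (fun ω : ℝ × E3 => (wt ω.1 * (Cg ω.1)⁻¹) *
      (Real.exp (-(2 * ω.1 ^ 2) * ‖x - ω.2‖ ^ 2) * Real.exp (-(2 * ω.1 ^ 2) * ‖y - ω.2‖ ^ 2)))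
      ((volume.restrict (Set.Ioi (0 : ℝ))).prod volume) := by
    rw [integrable_prod_iff (by
      refine Measurable.aestronglyMeasurable ?_
      unfold wt Cg
      fun_prop)]
    constructor
    · filter_upwards [ae_restrict_mem measurableSet_Ioi] with u hu
      exact (gauss_conv u hu x y).1.const_mul _
    · refine Integrable.congr k1 ?_
      filter_upwards [hin] with u hu
      rw [← hu]
      refine integral_congr_ae (Filter.Eventually.of_forall fun z => ?_)
      simp only
      rw [Real.norm_eq_abs, abs_of_nonneg (mul_nonneg (hwC u) (by positivity))]
  refine ⟨hint, ?_⟩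
  rw [integral_prod _ hint, integral_congr_ae hin, k2, K1, if_neg (sub_ne_zero.2 hxy)]

theorem K1_nonneg (x : E3) : 0 ≤ K1 x := by
  unfold K1
  split_ifs
  · exact zero_le_one
  · refine div_nonneg (sub_nonneg.2 (Real.exp_le_one_iff.2 ?_)) (norm_nonneg _)
    exact neg_nonpos.2 (norm_nonneg _)

theorem K1_meas : Measurable K1 := by
  unfold K1
  exact Measurable.ite (measurableSet_singleton 0) (by fun_prop) (by fun_prop)

/-- Nonnegativity of the Bopp–Podolsky energy: if `f` is measurable and
`V(|f|,|f|) < ∞`, then `V(f,f) ≥ 0`. -/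
theorem energy_nonneg (f : E3 → ℝ) (hf : Measurable f)
    (hV : Vlin (fun x => |f x|) (fun x => |f x|) < ⊤) :
    0 ≤ Vr f f := by
  have hKm := K1_meas
  have hm : Measurable (fun p : E3 × E3 => K1 (p.1 - p.2) * f p.1 * f p.2) := by fun_prop
  have hm' : Measurable (fun p : E3 × E3 =>
    ENNReal.ofReal (K1 (p.1 - p.2) * |f p.1| * |f p.2|)) := by
    simp only [← Real.norm_eq_abs]; fun_prop
  have hi : Integrable (fun p : E3 × E3 => K1 (p.1 - p.2) * f p.1 * f p.2)
      (volume.prod volume) := by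
    refine ⟨hm.aestronglyMeasurable, ?_⟩
    rw [hasFiniteIntegral_iff_norm]
    have : ∀ p : E3 × E3, ‖K1 (p.1 - p.2) * f p.1 * f p.2‖ =
        K1 (p.1 - p.2) * |f p.1| * |f p.2| := by
      intro p
      rw [Real.norm_eq_abs, abs_mul, abs_mul, abs_of_nonneg (K1_nonneg _)]
    simp only [this]
    rw [lintegral_prod _ hm'.aemeasurable]
    exact hV
  exact abs_pd ((volume.restrict (Set.Ioi (0 : ℝ))).prod (volume : Measure E3))
    (fun ω => wt ω.1 * (Cg ω.1)⁻¹)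
    (fun ω => mul_nonneg (wt_nonneg _) (inv_nonneg.2 (by unfold Cg; positivity)))
    (by unfold wt Cg; fun_prop)
    (fun ω x => Real.exp (-(2 * ω.1 ^ 2) * ‖x - ω.2‖ ^ 2)) (fun ω x => (Real.exp_pos _).le)
    (by unfold Function.uncurry; fun_prop) (fun x y => K1 (x - y)) K1_repr f hf hi
end
end

section
/- (Weighted lower bound for the Bopp–Podolsky energy of nonnegative densities.) Let K : ℝ³ → ℝ be defined by K(x) = (1 - exp(-‖x‖))/‖x‖ for x ≠ 0 and K(0) = 1, and set V(f,f) = ∫_{ℝ³}∫_{ℝ³} K(x-y) f(x) f(y) dx dy. Given α > 1/2, there exists a constant C > 0 (depending only on α) such that for every measurable f : ℝ³ → [0,∞), V(f,f) ≥ C · ( ∫_{ℝ³} f(x) / ( (1+‖x‖²)^{1/4} (1+|log ‖x‖|)^α ) dx )², where the inequality is understood in the extended nonnegative reals [0,∞]. -/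
open MeasureTheory Real
open scoped ENNReal Classical

noncomputable section

def gr (α r : ℝ) : ℝ := r ^ (-(3/2) : ℝ) * (1 + Real.log r) ^ (-α)

lemma gr_nonneg (α r : ℝ) (hr : 1 ≤ r) : 0 ≤ gr α r := by
  have := Real.log_nonneg hr
  unfold gr; positivity

lemma gr_anti (α : ℝ) (hα : 1/2 < α) {a b : ℝ} (ha : 1 ≤ a) (hab : a ≤ b) : gr α b ≤ gr α a := by
  have h1 := Real.log_nonneg ha
  have h2 := Real.log_le_log (by linarith) hab
  unfold gr
  apply mul_le_mul
  · exact Real.rpow_le_rpow_of_nonpos (by linarith) hab (by norm_num)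
  · exact Real.rpow_le_rpow_of_nonpos (by linarith) (by linarith) (by linarith)
  · have : 0 ≤ 1 + Real.log b := by linarith
    positivity
  · have : 0 ≤ a := by linarith
    positivity

lemma gr_meas (α : ℝ) : Measurable (gr α) := by
  unfold gr; fun_prop

lemma w_le (α : ℝ) (hα : 1/2 < α) (n : ℝ) (hn : 0 ≤ n) :
    1 / (((1 : ℝ) + n ^ 2) ^ ((1 : ℝ) / 4) * (1 + |Real.log n|) ^ α) ≤
      (8 * 4 ^ α) * (gr α (2 * (1 + n)) * (1 + n)) := by
  have hl : 0 ≤ |Real.log n| := abs_nonneg _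
  have hlog2 : Real.log 2 ≤ 1 := by linarith [Real.log_two_lt_d9]
  have hs : 0 ≤ Real.log (2 * (1 + n)) := Real.log_nonneg (by linarith)
  have hL : 1 + Real.log (2 * (1 + n)) ≤ 4 * (1 + |Real.log n|) := by
    rw [Real.log_mul (by norm_num) (by linarith)]
    have : Real.log (1 + n) ≤ 1 + |Real.log n| := by
      rcases le_total n 1 with h | h
      · have := Real.log_le_log (by linarith : 0 < 1 + n) (by linarith : 1 + n ≤ 2)
        linarith
      · have := Real.log_le_log (by linarith : 0 < 1 + n) (by linarith : 1 + n ≤ 2 * n)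
        rw [Real.log_mul (by norm_num) (by linarith)] at this
        linarith [le_abs_self (Real.log n)]
    linarith
  have e1 : ((1 + |Real.log n|) ^ α)⁻¹ ≤ 4 ^ α * (1 + Real.log (2 * (1 + n))) ^ (-α) := by
    rw [Real.rpow_neg (by linarith), ← div_eq_mul_inv, inv_eq_one_div,
      div_le_div_iff₀ (by positivity) (by positivity), one_mul, ← Real.mul_rpow (by norm_num) (by positivity)]
    exact Real.rpow_le_rpow (by linarith) hL (by linarith)
  have e2 : (((1 : ℝ) + n ^ 2) ^ ((1 : ℝ) / 4))⁻¹ ≤ 8 * ((2 * (1 + n)) ^ (-(3/2) : ℝ) * (1 + n)) := by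
    have h0 : 0 < 2 * (1 + n) := by linarith
    have : (2 * (1 + n)) ^ (-(3/2) : ℝ) = (2 * (1 + n)) ^ (-(1/2) : ℝ) * (2 * (1 + n))⁻¹ := by
      rw [← Real.rpow_neg_one, ← Real.rpow_add h0]; norm_num
    have e : 8 * ((2 * (1 + n)) ^ (-(3/2) : ℝ) * (1 + n)) = 4 * ((2 * (1 + n)) ^ ((1/2) : ℝ))⁻¹ := by
      rw [this, Real.rpow_neg h0.le]
      field_simp; ring
    rw [e, ← div_eq_mul_inv, inv_eq_one_div, div_le_div_iff₀ (by positivity) (by positivity), one_mul]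
    have h4 : (4 : ℝ) = (256 : ℝ) ^ ((1:ℝ)/4) := by
      rw [show (256 : ℝ) = 4 ^ (4 : ℝ) by norm_num, ← Real.rpow_mul (by norm_num)]; norm_num
    have h5 : (2 * (1 + n)) ^ ((1/2) : ℝ) = ((2 * (1 + n)) ^ (2:ℝ)) ^ ((1:ℝ)/4) := by
      rw [← Real.rpow_mul h0.le]; norm_num
    have h6 : 4 * (1 + n ^ 2) ^ ((1:ℝ)/4) = (256 * (1 + n ^ 2)) ^ ((1:ℝ)/4) := by
      rw [Real.mul_rpow (by norm_num) (by positivity), ← h4]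
    rw [h5, h6]
    apply Real.rpow_le_rpow (by positivity) _ (by norm_num)
    rw [Real.rpow_two]
    nlinarith [sq_nonneg (n - 1)]
  calc _ = (((1 : ℝ) + n ^ 2) ^ ((1 : ℝ) / 4))⁻¹ * ((1 + |Real.log n|) ^ α)⁻¹ := by
        rw [one_div, mul_inv]
    _ ≤ (8 * ((2 * (1 + n)) ^ (-(3/2) : ℝ) * (1 + n))) * (4 ^ α * (1 + Real.log (2 * (1 + n))) ^ (-α)) :=
        mul_le_mul e2 e1 (by positivity) (by positivity)
    _ = _ := by unfold gr; ring

lemma A_fin (α : ℝ) (hα : 1/2 < α) :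
    ∫⁻ r in Set.Ioi (1:ℝ), ENNReal.ofReal ((gr α r * r) ^ 2) < ⊤ := by
  have hI : IntegrableOn (fun r : ℝ => (1 + Real.log r) ^ (-(2*α)) * r⁻¹) (Set.Ioi 1) := by
    apply integrableOn_Ioi_deriv_of_nonneg (l := 0)
      (g := fun r => (1 + Real.log r) ^ (1 - 2*α) / (1 - 2 * α))
    · apply ContinuousAt.continuousWithinAt
      apply ContinuousAt.div_const
      apply ContinuousAt.rpow_const
      · exact continuousAt_const.add (Real.continuousAt_log (by norm_num))
      · left; simp
    · intro x hx
      have hx : 1 < x := hx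
      have hl := Real.log_pos hx
      have h := (((Real.hasDerivAt_log (by linarith : x ≠ 0)).const_add 1).rpow_const
        (p := 1 - 2 * α) (Or.inl (by linarith))).div_const (1 - 2 * α)
      have h1 : 1 - 2 * α ≠ 0 := by linarith
      have h2 : x⁻¹ * (1 - 2 * α) * (1 + Real.log x) ^ (1 - 2 * α - 1) / (1 - 2 * α) =
          (1 + Real.log x) ^ (-(2*α)) * x⁻¹ := by
        rw [show 1 - 2 * α - 1 = -(2 * α) by ring]
        field_simp
      exact h2 ▸ h
    · intro x hx
      have hx : 1 < x := hx
      have hl := Real.log_pos hx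
      positivity
    · have h := (tendsto_rpow_neg_atTop (by linarith : 0 < 2 * α - 1)).comp
        (Filter.tendsto_atTop_add_const_left _ 1 Real.tendsto_log_atTop)
      have h2 := h.div_const (1 - 2 * α)
      rw [zero_div] at h2
      refine h2.congr fun x => ?_
      simp
  have := hI.lintegral_lt_top
  refine lt_of_le_of_lt (setLIntegral_mono' measurableSet_Ioi fun r hr => ?_) this
  have hr : 1 < r := hr
  have hl := Real.log_pos hr
  apply ENNReal.ofReal_le_ofReal
  apply le_of_eq
  have h0 : 0 < r := by linarith
  unfold gr
  have a1 : (r ^ (-(3/2) : ℝ)) ^ 2 = r ^ (-3 : ℝ) := by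
    rw [← Real.rpow_natCast, ← Real.rpow_mul h0.le]; norm_num
  have a2 : ((1 + Real.log r) ^ (-α)) ^ 2 = (1 + Real.log r) ^ (-(2*α)) := by
    rw [← Real.rpow_natCast, ← Real.rpow_mul (by linarith)]; congr 1; push_cast; ring
  have a3 : r ^ (-3 : ℝ) = (r ^ 3)⁻¹ := by
    rw [Real.rpow_neg h0.le]; norm_cast
  rw [mul_pow, mul_pow, a1, a2, a3]
  field_simp

lemma K1_ge (x : E3) : 1 / (1 + ‖x‖) ≤ K1 x := by
  unfold K1
  split_ifs with h
  · simp [h]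
  · have hx : 0 < ‖x‖ := norm_pos_iff.mpr h
    rw [div_le_div_iff₀ (by positivity) hx]
    have h1 := Real.add_one_le_exp ‖x‖
    have h2 : Real.exp (-‖x‖) * Real.exp ‖x‖ = 1 := by rw [← Real.exp_add]; simp
    have h3 := Real.exp_pos (-‖x‖)
    nlinarith

/-- Indicator of `1 + ‖x‖ < r`. -/
def ph (r : ℝ) (x : E3) : ℝ≥0∞ := if 1 + ‖x‖ < r then 1 else 0

lemma ph_meas : Measurable (fun p : ℝ × E3 => ph p.1 p.2) := by
  unfold ph
  refine Measurable.ite ?_ measurable_const measurable_const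
  exact measurableSet_lt (by fun_prop) (by fun_prop)

lemma ph_comp {β : Type} [MeasurableSpace β] {u : β → ℝ} {v : β → E3} (hu : Measurable u)
    (hv : Measurable v) : Measurable (fun b => ph (u b) (v b)) := by
  unfold ph
  refine Measurable.ite ?_ measurable_const measurable_const
  exact measurableSet_lt (by fun_prop) (by fun_prop)

lemma ph_mx (r : ℝ) : Measurable (fun x : E3 => ph r x) := by
  unfold ph
  refine Measurable.ite ?_ measurable_const measurable_const
  exact measurableSet_lt (by fun_prop) (by fun_prop)

lemma ph_mr (x : E3) : Measurable (fun r : ℝ => ph r x) := by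
  unfold ph
  refine Measurable.ite ?_ measurable_const measurable_const
  exact measurableSet_lt (by fun_prop) (by fun_prop)

lemma w_int (α : ℝ) (hα : 1/2 < α) (x : E3) :
    ENNReal.ofReal (1 / (((1 : ℝ) + ‖x‖ ^ 2) ^ ((1 : ℝ) / 4) * (1 + |Real.log ‖x‖|) ^ α)) ≤
      ENNReal.ofReal (8 * 4 ^ α) * ∫⁻ r in Set.Ioi (1:ℝ), ph r x * ENNReal.ofReal (gr α r) := by
  have hn := norm_nonneg x
  refine (ENNReal.ofReal_le_ofReal (w_le α hα ‖x‖ hn)).trans ?_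
  rw [ENNReal.ofReal_mul (by positivity)]
  gcongr
  rw [ENNReal.ofReal_mul (gr_nonneg _ _ (by linarith))]
  calc _ = ∫⁻ r in Set.Ioc (1 + ‖x‖) (2 * (1 + ‖x‖)), ENNReal.ofReal (gr α (2 * (1 + ‖x‖))) := by
        rw [setLIntegral_const, Real.volume_Ioc]; congr 2; ring
    _ ≤ ∫⁻ r in Set.Ioc (1 + ‖x‖) (2 * (1 + ‖x‖)), ph r x * ENNReal.ofReal (gr α r) := by
        refine setLIntegral_mono' measurableSet_Ioc fun r hr => ?_
        rw [ph, if_pos hr.1, one_mul]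
        exact ENNReal.ofReal_le_ofReal (gr_anti α hα (by linarith [hr.1]) hr.2)
    _ ≤ _ := lintegral_mono_set fun r hr => by
        have := hr.1
        show 1 < r
        linarith

lemma ker_int (x y : E3) :
    ∫⁻ r in Set.Ioi (1:ℝ), ph r x * ph r y * ENNReal.ofReal (r ^ (-2:ℝ)) ≤
      2 * ENNReal.ofReal (K1 (x - y)) := by
  set m := max (1 + ‖x‖) (1 + ‖y‖) with hm
  have h1 : 1 + ‖x‖ ≤ m := le_max_left _ _
  have h2 : 1 + ‖y‖ ≤ m := le_max_right _ _
  have hx := norm_nonneg x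
  have hy := norm_nonneg y
  have hmp : 0 < m := by linarith
  calc _ ≤ ∫⁻ r, (Set.Ioi m).indicator (fun r => ENNReal.ofReal (r ^ (-2:ℝ))) r := by
        refine (setLIntegral_le_lintegral _ _).trans (lintegral_mono fun r => ?_)
        by_cases h : r ∈ Set.Ioi m
        · rw [Set.indicator_of_mem h]
          unfold ph
          split_ifs <;> simp
        · rw [Set.indicator_of_notMem h]
          have : ¬ (1 + ‖x‖ < r ∧ 1 + ‖y‖ < r) := fun hh => h (max_lt hh.1 hh.2)
          unfold ph
          split_ifs <;> simp_all
    _ = ∫⁻ r in Set.Ioi m, ENNReal.ofReal (r ^ (-2:ℝ)) := lintegral_indicator measurableSet_Ioi _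
    _ = ENNReal.ofReal (1 / m) := by
        rw [← ofReal_integral_eq_lintegral_ofReal
          (integrableOn_Ioi_rpow_of_lt (by norm_num) hmp), integral_Ioi_rpow_of_lt (by norm_num) hmp]
        · congr 1
          rw [show (-2:ℝ) + 1 = -1 by norm_num, Real.rpow_neg_one]; norm_num
        · filter_upwards [self_mem_ae_restrict measurableSet_Ioi] with r hr
          have : 0 < r := hmp.trans hr
          simp only [Pi.zero_apply]
          positivity
    _ ≤ ENNReal.ofReal (2 * K1 (x - y)) := by
        apply ENNReal.ofReal_le_ofReal
        refine le_trans ?_ (mul_le_mul_of_nonneg_left (K1_ge (x - y)) (by norm_num))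
        rw [mul_one_div, div_le_div_iff₀ hmp (by positivity)]
        have := norm_sub_le x y
        linarith
    _ = _ := by rw [ENNReal.ofReal_mul (by norm_num)]; simp

lemma M_sq (F : E3 → ℝ≥0∞) (hF : Measurable F) :
    ∫⁻ r in Set.Ioi (1:ℝ), (∫⁻ x, F x * ph r x) ^ 2 * ENNReal.ofReal (r ^ (-2:ℝ)) ≤
      2 * ∫⁻ x, ∫⁻ y, ENNReal.ofReal (K1 (x - y)) * F x * F y := by
  have hph := ph_meas
  have m1 : ∀ r, Measurable fun x => F x * ph r x := fun r =>
    hF.mul (ph_mx r)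
  have mpx : ∀ x, Measurable fun r => ph r x := fun x =>
    ph_mr x
  calc _ = ∫⁻ r in Set.Ioi (1:ℝ), ∫⁻ x, ∫⁻ y, (F x * F y) * (ph r x * ph r y * ENNReal.ofReal (r ^ (-2:ℝ))) := by
        refine lintegral_congr fun r => ?_
        have : ∀ x, ∫⁻ y, (F x * F y) * (ph r x * ph r y * ENNReal.ofReal (r ^ (-2:ℝ))) =
            (F x * ph r x) * ((∫⁻ y, F y * ph r y) * ENNReal.ofReal (r ^ (-2:ℝ))) := fun x => by
          rw [← lintegral_mul_const _ (m1 r), ← lintegral_const_mul _ ((m1 r).mul_const _)]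
          exact lintegral_congr fun y => by ring
        simp_rw [this]
        rw [lintegral_mul_const _ (m1 r)]
        ring
    _ = ∫⁻ x, ∫⁻ r in Set.Ioi (1:ℝ), ∫⁻ y, (F x * F y) * (ph r x * ph r y * ENNReal.ofReal (r ^ (-2:ℝ))) := by
        apply lintegral_lintegral_swap
        apply Measurable.aemeasurable
        apply Measurable.lintegral_prod_right'
          (f := fun q : (ℝ × E3) × E3 => (F q.1.2 * F q.2) * (ph q.1.1 q.1.2 * ph q.1.1 q.2 * ENNReal.ofReal (q.1.1 ^ (-2:ℝ))))
        refine Measurable.mul (by fun_prop) (Measurable.mul (Measurable.mul ?_ ?_) (by fun_prop))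
        · exact ph_comp (measurable_fst.comp measurable_fst) (measurable_snd.comp measurable_fst)
        · exact ph_comp (measurable_fst.comp measurable_fst) measurable_snd
    _ = ∫⁻ x, ∫⁻ y, ∫⁻ r in Set.Ioi (1:ℝ), (F x * F y) * (ph r x * ph r y * ENNReal.ofReal (r ^ (-2:ℝ))) := by
        refine lintegral_congr fun x => ?_
        apply lintegral_lintegral_swap
        apply Measurable.aemeasurable
        refine Measurable.mul (by fun_prop) (Measurable.mul (Measurable.mul ?_ ?_) (by fun_prop))
        · exact ph_comp measurable_fst measurable_const
        · exact ph_comp measurable_fst measurable_snd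
    _ ≤ ∫⁻ x, ∫⁻ y, 2 * (ENNReal.ofReal (K1 (x - y)) * F x * F y) := by
        refine lintegral_mono fun x => lintegral_mono fun y => ?_
        show _ ≤ _
        have hm : Measurable fun r => ph r x * ph r y * ENNReal.ofReal (r ^ (-2:ℝ)) :=
          ((mpx x).mul (mpx y)).mul (by fun_prop)
        rw [lintegral_const_mul _ hm]
        calc _ ≤ (F x * F y) * (2 * ENNReal.ofReal (K1 (x - y))) := by gcongr; exact ker_int x y
          _ = _ := by ring
    _ = _ := by
        simp_rw [lintegral_const_mul' 2 _ (by norm_num : (2:ℝ≥0∞) ≠ ⊤)]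

lemma CS (α : ℝ) (M : ℝ → ℝ≥0∞) (hM : Measurable M) :
    (∫⁻ r in Set.Ioi (1:ℝ), M r * ENNReal.ofReal (gr α r)) ^ 2 ≤
      (∫⁻ r in Set.Ioi (1:ℝ), ENNReal.ofReal ((gr α r * r) ^ 2)) *
      ∫⁻ r in Set.Ioi (1:ℝ), M r ^ 2 * ENNReal.ofReal (r ^ (-2:ℝ)) := by
  have hg := gr_meas α
  have h := ENNReal.lintegral_mul_le_Lp_mul_Lq (volume.restrict (Set.Ioi (1:ℝ)))
    (p := 2) (q := 2) (by constructor <;> norm_num)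
    (f := fun r => ENNReal.ofReal (gr α r * r)) (g := fun r => M r * ENNReal.ofReal (r⁻¹))
    (by fun_prop) (by fun_prop)
  have e0 : ∫⁻ r in Set.Ioi (1:ℝ), M r * ENNReal.ofReal (gr α r) = ∫⁻ r in Set.Ioi (1:ℝ),
      ((fun r => ENNReal.ofReal (gr α r * r)) * (fun r => M r * ENNReal.ofReal (r⁻¹))) r := by
    refine setLIntegral_congr_fun measurableSet_Ioi fun r hr => ?_
    have hr : 1 < r := hr
    have h0 : 0 < r := by linarith
    simp only [Pi.mul_apply]
    rw [mul_left_comm, ← ENNReal.ofReal_mul (mul_nonneg (gr_nonneg _ _ hr.le) h0.le)]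
    congr 2
    field_simp
  have e1 : ∫⁻ r in Set.Ioi (1:ℝ), ENNReal.ofReal (gr α r * r) ^ (2:ℝ) =
      ∫⁻ r in Set.Ioi (1:ℝ), ENNReal.ofReal ((gr α r * r) ^ 2) := by
    refine setLIntegral_congr_fun measurableSet_Ioi fun r hr => ?_
    have hr : 1 < r := hr
    rw [ENNReal.rpow_two, ENNReal.ofReal_pow (mul_nonneg (gr_nonneg _ _ hr.le) (by linarith))]
  have e2 : ∫⁻ r in Set.Ioi (1:ℝ), (M r * ENNReal.ofReal (r⁻¹)) ^ (2:ℝ) =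
      ∫⁻ r in Set.Ioi (1:ℝ), M r ^ 2 * ENNReal.ofReal (r ^ (-2:ℝ)) := by
    refine setLIntegral_congr_fun measurableSet_Ioi fun r hr => ?_
    have hr : 1 < r := hr
    have h0 : 0 < r := by linarith
    rw [ENNReal.rpow_two, mul_pow, ← ENNReal.ofReal_pow (by positivity), Real.rpow_neg h0.le,
      Real.rpow_two, inv_pow]
  rw [← e0, e1, e2] at h
  refine (pow_le_pow_left₀ zero_le h 2).trans (le_of_eq ?_)
  rw [mul_pow, ← ENNReal.rpow_natCast, ← ENNReal.rpow_natCast, ← ENNReal.rpow_mul,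
    ← ENNReal.rpow_mul]
  norm_num

/-- Weighted lower bound for the Bopp–Podolsky energy of nonnegative densities:
for `α > 1/2` there is `C > 0` such that for every measurable `f ≥ 0`,
`V(f,f) ≥ C (∫ f(x) / ((1+‖x‖²)^{1/4} (1+|log ‖x‖|)^α) dx)²` in `[0,∞]`. -/
theorem energy_weighted_lower_bound (α : ℝ) (hα : 1 / 2 < α) :
    ∃ C : ℝ, 0 < C ∧ ∀ f : E3 → ℝ, Measurable f → (∀ x, 0 ≤ f x) →
      ENNReal.ofReal C *
        (∫⁻ x, ENNReal.ofReal
          (f x / (((1 : ℝ) + ‖x‖ ^ 2) ^ ((1 : ℝ) / 4) * (1 + |Real.log ‖x‖|) ^ α))) ^ 2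
        ≤ Vlin f f := by
  have hA := A_fin α hα
  set A := ∫⁻ r in Set.Ioi (1:ℝ), ENNReal.ofReal ((gr α r * r) ^ 2) with hAdef
  set c : ℝ := 8 * 4 ^ α with hc
  have hcp : 0 < c := by positivity
  set D : ℝ := c ^ 2 * ((A.toReal + 1) * 2) with hD
  have hAn : 0 ≤ A.toReal := ENNReal.toReal_nonneg
  have hDp : 0 < D := by positivity
  refine ⟨1 / D, by positivity, fun f hf hf0 => ?_⟩
  set F : E3 → ℝ≥0∞ := fun x => ENNReal.ofReal (f x) with hFdef
  have hF : Measurable F := hf.ennreal_ofReal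
  have hg := gr_meas α
  have hK : ∀ x : E3, 0 ≤ K1 x := fun x => le_trans (by positivity) (K1_ge x)
  have hV : Vlin f f = ∫⁻ x, ∫⁻ y, ENNReal.ofReal (K1 (x - y)) * F x * F y := by
    unfold Vlin
    refine lintegral_congr fun x => lintegral_congr fun y => ?_
    rw [ENNReal.ofReal_mul (mul_nonneg (hK _) (hf0 _)), ENNReal.ofReal_mul (hK _)]
  have mpx : ∀ x, Measurable fun r => ph r x := fun x =>
    ph_mr x
  have mFp : Measurable (fun p : ℝ × E3 => F p.2 * ph p.1 p.2) :=
    (hF.comp measurable_snd).mul ph_meas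
  have m1 : ∀ r, Measurable fun x => F x * ph r x := fun r =>
    hF.mul (ph_mx r)
  have hM : Measurable fun r => ∫⁻ x, F x * ph r x := mFp.lintegral_prod_right'
  have hS : (∫⁻ x, ENNReal.ofReal
      (f x / (((1 : ℝ) + ‖x‖ ^ 2) ^ ((1 : ℝ) / 4) * (1 + |Real.log ‖x‖|) ^ α))) ≤
      ENNReal.ofReal c * ∫⁻ r in Set.Ioi (1:ℝ), (∫⁻ x, F x * ph r x) * ENNReal.ofReal (gr α r) := by
    calc _ ≤ ∫⁻ x, ENNReal.ofReal c * ∫⁻ r in Set.Ioi (1:ℝ), F x * ph r x * ENNReal.ofReal (gr α r) := by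
          refine lintegral_mono fun x => ?_
          show _ ≤ _
          rw [div_eq_mul_one_div, ENNReal.ofReal_mul (hf0 x)]
          refine (mul_le_mul_right (w_int α hα x) _).trans (le_of_eq ?_)
          simp_rw [mul_assoc]
          have hm : Measurable fun r => ph r x * ENNReal.ofReal (gr α r) :=
            (mpx x).mul (by fun_prop)
          rw [lintegral_const_mul _ hm]
          exact mul_left_comm _ _ _
      _ = ENNReal.ofReal c * ∫⁻ x, ∫⁻ r in Set.Ioi (1:ℝ), F x * ph r x * ENNReal.ofReal (gr α r) :=
          lintegral_const_mul' _ _ ENNReal.ofReal_ne_top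
      _ = ENNReal.ofReal c * ∫⁻ r in Set.Ioi (1:ℝ), ∫⁻ x, F x * ph r x * ENNReal.ofReal (gr α r) := by
          congr 1
          apply lintegral_lintegral_swap
          apply Measurable.aemeasurable
          exact ((hF.comp measurable_fst).mul (ph_comp measurable_snd measurable_fst)).mul
            (hg.comp measurable_snd).ennreal_ofReal
      _ = _ := by
          congr 1
          exact lintegral_congr fun r => lintegral_mul_const _ (m1 r)
  have hA' : A ≤ ENNReal.ofReal (A.toReal + 1) := by
    conv_lhs => rw [← ENNReal.ofReal_toReal hA.ne]
    exact ENNReal.ofReal_le_ofReal (by linarith)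
  have key : (∫⁻ x, ENNReal.ofReal
      (f x / (((1 : ℝ) + ‖x‖ ^ 2) ^ ((1 : ℝ) / 4) * (1 + |Real.log ‖x‖|) ^ α))) ^ 2 ≤
      ENNReal.ofReal D * Vlin f f := by
    calc _ ≤ (ENNReal.ofReal c * ∫⁻ r in Set.Ioi (1:ℝ), (∫⁻ x, F x * ph r x) * ENNReal.ofReal (gr α r)) ^ 2 :=
          pow_le_pow_left₀ zero_le hS 2
      _ = ENNReal.ofReal c ^ 2 * (∫⁻ r in Set.Ioi (1:ℝ), (∫⁻ x, F x * ph r x) * ENNReal.ofReal (gr α r)) ^ 2 :=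
          mul_pow _ _ _
      _ ≤ ENNReal.ofReal c ^ 2 * (ENNReal.ofReal (A.toReal + 1) * (2 * Vlin f f)) := by
          gcongr
          refine (CS α _ hM).trans ?_
          rw [hV]
          exact mul_le_mul' hA' (M_sq F hF)
      _ = _ := by
          have hDe : ENNReal.ofReal D = ENNReal.ofReal c ^ 2 * (ENNReal.ofReal (A.toReal + 1) * 2) := by
            rw [hD, ENNReal.ofReal_mul (pow_nonneg hcp.le 2),
              ENNReal.ofReal_mul (by linarith : 0 ≤ A.toReal + 1),
              ENNReal.ofReal_pow hcp.le, ENNReal.ofReal_ofNat]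
          rw [hDe]
          simp only [mul_assoc]
  calc _ ≤ ENNReal.ofReal (1 / D) * (ENNReal.ofReal D * Vlin f f) := by gcongr
    _ = Vlin f f := by
        rw [← mul_assoc, ← ENNReal.ofReal_mul (by positivity), one_div_mul_cancel hDp.ne',
          ENNReal.ofReal_one, one_mul]
end
end
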